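/- arXiv:1508.04484 — 9 statements merged into one kernel-verified Lean document; each statement's English description precedes it below -/
import Mathlib

section
/- If k ≤ n < 2k, then for every position x of Exact k-Nim Nim^=_{n,k}, the Sprague–Grundy value of x equals its Tetris value: G(x) = T_{n,k}(x). -/
/-- A move in Exact k-Nim `Nim^=_{n,k}`: all piles weakly decrease and
exactly `k` piles strictly decrease. -/
def ExactMove (n k : ℕ) (x x' : Fin n → ℕ) : Prop :=
  (∀ i, x' i ≤ x i) ∧ (Finset.univ.filter fun i => x' i < x i).card = k

/-- There is a chain of `m` consecutive moves starting at `x`. -/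
def HasChain (n k : ℕ) (x : Fin n → ℕ) (m : ℕ) : Prop :=
  ∃ f : Fin (m + 1) → Fin n → ℕ, f 0 = x ∧
    ∀ i : Fin m, ExactMove n k (f i.castSucc) (f i.succ)

/-- The Tetris function `T_{n,k}(x)`: the maximum number of consecutive moves
that can be made starting from `x`. -/
noncomputable def tetris (n k : ℕ) (x : Fin n → ℕ) : ℕ :=
  sSup {m | HasChain n k x m}

/-- The Sprague–Grundy function of Exact k-Nim, defined by the mex recursion
`G(x) = mex {G(x') : x → x'}`.  (For `k ≥ 1` every move satisfies `x' ≠ x`, so the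
extra hypothesis `x' ≠ x`, needed for well-foundedness, is automatic.) -/
noncomputable def grundy (n k : ℕ) (x : Fin n → ℕ) : ℕ :=
  sInf {g : ℕ | ∀ x' : Fin n → ℕ, ExactMove n k x x' → x' ≠ x → grundy n k x' ≠ g}
termination_by ∑ i, x i
decreasing_by
  rename_i hmv hne
  have hle := hmv.1
  have hex : ∃ i, x' i < x i := by
    by_contra hc
    push_neg at hc
    exact hne (funext fun i => le_antisymm (hle i) (hc i))
  obtain ⟨i, hi⟩ := hex
  exact Finset.sum_lt_sum (fun j _ => hle j) ⟨i, Finset.mem_univ i, hi⟩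

def RChain (n k : ℕ) : ℕ → (Fin n → ℕ) → Prop
  | 0, _ => True
  | m + 1, x => ∃ y, ExactMove n k x y ∧ RChain n k m y

theorem hasChain_iff (n k m : ℕ) : ∀ x, HasChain n k x m ↔ RChain n k m x := by
  induction m with
  | zero =>
    intro x
    simp only [RChain, iff_true]
    exact ⟨fun _ => x, rfl, fun i => i.elim0⟩
  | succ m ih =>
    intro x
    constructor
    · rintro ⟨f, h0, hf⟩
      refine ⟨f 1, ?_, (ih _).1 ⟨fun i => f i.succ, rfl, fun i => ?_⟩⟩
      · have := hf 0
        simpa [h0] using this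
      · have := hf i.succ
        simpa using this
    · rintro ⟨y, hy, hc⟩
      obtain ⟨g, g0, hg⟩ := (ih _).2 hc
      refine ⟨Fin.cons x g, by simp, fun i => ?_⟩
      refine Fin.cases ?_ (fun j => ?_) i
      · simpa [g0] using hy
      · have := hg j
        rw [← Fin.succ_castSucc, Fin.cons_succ, Fin.cons_succ]
        exact this

theorem RChain.mono (n k m : ℕ) : ∀ x x' : Fin n → ℕ, (∀ i, x i ≤ x' i) →
    RChain n k m x → RChain n k m x' := by
  induction m with
  | zero => intros; trivial
  | succ m ih =>
    rintro x x' h ⟨y, hy, hc⟩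
    refine ⟨fun i => y i + (x' i - x i), ⟨fun i => ?_, ?_⟩, ih y _ (fun i => by omega) hc⟩
    · have := hy.1 i
      have := h i
      show y i + (x' i - x i) ≤ x' i
      omega
    · rw [← hy.2]
      congr 1
      ext i
      have := hy.1 i
      have := h i
      simp only [Finset.mem_filter, Finset.mem_univ, true_and]
      omega

theorem RChain.dec (n k m : ℕ) (i : Fin n) : ∀ x : Fin n → ℕ,
    RChain n k (m + 1) x → RChain n k m (Function.update x i (x i - 1)) := by
  induction m with
  | zero => intros; trivial
  | succ m ih =>
    rintro x ⟨y, hy, hc⟩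
    by_cases hi : y i < x i
    · refine RChain.mono n k _ y _ (fun j => ?_) hc
      by_cases hj : j = i
      · subst hj; simp; omega
      · simpa [hj] using hy.1 j
    · have hxy : y i = x i := le_antisymm (hy.1 i) (not_lt.1 hi)
      refine ⟨Function.update y i (y i - 1), ⟨fun j => ?_, ?_⟩, ih y hc⟩
      · by_cases hj : j = i
        · subst hj; simp [hxy]
        · simpa [hj] using hy.1 j
      · rw [← hy.2]
        congr 1
        ext j
        by_cases hj : j = i
        · subst hj; simp [hxy]
        · simp [hj]

theorem RChain.pred (n k m : ℕ) : ∀ x : Fin n → ℕ,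
    RChain n k (m + 1) x → RChain n k m x := by
  induction m with
  | zero => intros; trivial
  | succ m ih =>
    rintro x ⟨y, hy, hc⟩
    exact ⟨y, hy, ih y hc⟩

theorem RChain.le (n k : ℕ) (x : Fin n → ℕ) {m m' : ℕ} (h : m ≤ m')
    (hc : RChain n k m' x) : RChain n k m x := by
  induction m', h using Nat.le_induction with
  | base => exact hc
  | succ p _ ih => exact ih (RChain.pred _ _ _ _ hc)

theorem ExactMove.exists_lt {n k : ℕ} (hk : 0 < k) {x y : Fin n → ℕ} (h : ExactMove n k x y) :
    ∃ i, y i < x i := by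
  have h2 := h.2
  obtain ⟨i, hi⟩ := Finset.card_pos.1 (h2 ▸ hk)
  exact ⟨i, (Finset.mem_filter.1 hi).2⟩

theorem ExactMove.sum_lt {n k : ℕ} (hk : 0 < k) {x y : Fin n → ℕ} (h : ExactMove n k x y) :
    ∑ i, y i < ∑ i, x i := by
  obtain ⟨i, hi⟩ := h.exists_lt hk
  exact Finset.sum_lt_sum (fun j _ => h.1 j) ⟨i, Finset.mem_univ i, hi⟩

theorem RChain.bound (n k m : ℕ) (hk : 0 < k) : ∀ x : Fin n → ℕ,
    RChain n k m x → m ≤ ∑ i, x i := by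
  induction m with
  | zero => intros; omega
  | succ m ih =>
    rintro x ⟨y, hy, hc⟩
    have := ih y hc
    have := hy.sum_lt hk
    omega

theorem rchain_iff (n k m : ℕ) (hk : 0 < k) (x : Fin n → ℕ) :
    RChain n k m x ↔ m ≤ tetris n k x := by
  have hb : BddAbove {m | HasChain n k x m} :=
    ⟨∑ i, x i, fun m hm => RChain.bound n k m hk x ((hasChain_iff _ _ _ _).1 hm)⟩
  constructor
  · intro h
    exact le_csSup hb ((hasChain_iff _ _ _ _).2 h)
  · intro h
    have hmem : tetris n k x ∈ {m | HasChain n k x m} :=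
      Nat.sSup_mem ⟨0, (hasChain_iff _ _ _ _).2 trivial⟩ hb
    exact RChain.le n k x h ((hasChain_iff _ _ _ _).1 hmem)

theorem descend (n k : ℕ) (hn : n < 2 * k) (S : Finset (Fin n)) (hS : S.card = k) (s : ℕ) :
    ∀ N : ℕ, ∀ y : Fin n → ℕ, ∑ i, y i = N → s ≤ tetris n k y →
    ∃ z : Fin n → ℕ, (∀ i, z i ≤ y i) ∧ (∀ i, i ∉ S → z i = y i) ∧ tetris n k z = s := by
  have hk : 0 < k := by omega
  intro N
  induction N using Nat.strong_induction_on with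
  | _ N ih =>
    intro y hN hs
    rcases hs.eq_or_lt with h | h
    · exact ⟨y, fun _ => le_rfl, fun _ _ => rfl, h.symm⟩
    have hc : RChain n k (s + 1) y := (rchain_iff n k _ hk y).2 h
    have hex : ∃ i ∈ S, 0 < y i := by
      by_contra hcon
      push Not at hcon
      obtain ⟨w, hw, -⟩ := hc
      have hsub : (Finset.univ.filter fun i => w i < y i) ⊆ Sᶜ := by
        intro i hi
        rw [Finset.mem_compl]
        intro hiS
        have := hcon i hiS
        have := (Finset.mem_filter.1 hi).2
        omega
      have := Finset.card_le_card hsub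
      rw [hw.2, Finset.card_compl, hS, Fintype.card_fin] at this
      omega
    obtain ⟨i, hiS, hi⟩ := hex
    have hle : ∀ j, Function.update y i (y i - 1) j ≤ y j := by
      intro j
      by_cases hj : j = i
      · subst hj; simp
      · simp [hj]
    have hlt : ∑ j, Function.update y i (y i - 1) j < N := by
      rw [← hN]
      exact Finset.sum_lt_sum (fun j _ => hle j) ⟨i, Finset.mem_univ i, by simp; omega⟩
    obtain ⟨z, h1, h2, h3⟩ := ih _ hlt _ rfl ((rchain_iff n k _ hk _).1 (RChain.dec n k s i y hc))
    refine ⟨z, fun j => (h1 j).trans (hle j), fun j hj => ?_, h3⟩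
    rw [h2 j hj]
    have : j ≠ i := fun h => hj (h ▸ hiS)
    simp [this]

theorem grundy_eq_tetris_of_n_lt_two_mul_k (n k : ℕ) (hkn : k ≤ n) (hn : n < 2 * k)
    (x : Fin n → ℕ) : grundy n k x = tetris n k x := by
  have hk : 0 < k := by omega
  induction hN : ∑ i, x i using Nat.strong_induction_on generalizing x with
  | _ N ih =>
    rw [grundy]
    apply le_antisymm
    · apply Nat.sInf_le
      intro x' hm _ he
      rw [ih _ (hN ▸ hm.sum_lt hk) x' rfl] at he
      have h1 : RChain n k (tetris n k x + 1) x :=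
        ⟨x', hm, (rchain_iff n k _ hk x').2 he.ge⟩
      have := (rchain_iff n k _ hk x).1 h1
      omega
    · refine le_csInf ?_ ?_
      · refine ⟨tetris n k x, fun x' hm _ he => ?_⟩
        rw [ih _ (hN ▸ hm.sum_lt hk) x' rfl] at he
        have h1 : RChain n k (tetris n k x + 1) x :=
          ⟨x', hm, (rchain_iff n k _ hk x').2 he.ge⟩
        have := (rchain_iff n k _ hk x).1 h1
        omega
      · intro g hg
        by_contra hlt
        push Not at hlt
        obtain ⟨y, hy, hc⟩ := (rchain_iff n k (g + 1) hk x).2 hlt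
        obtain ⟨z, h1, h2, h3⟩ := descend n k hn (Finset.univ.filter fun i => y i < x i) hy.2 g _ y
          rfl ((rchain_iff n k g hk y).1 hc)
        have hz : ExactMove n k x z := by
          refine ⟨fun i => (h1 i).trans (hy.1 i), ?_⟩
          rw [← hy.2]
          congr 1
          ext i
          have a := h1 i
          have b := h2 i
          simp only [Finset.mem_filter, Finset.mem_univ, true_and] at b ⊢
          constructor
          · intro h
            by_contra hh
            rw [b hh] at h
            exact hh h
          · intro h
            omega
        have hs := hz.sum_lt hk
        refine hg z hz (fun h => ?_) ?_
        · subst h; omega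
        · rw [ih _ (hN ▸ hs) z rfl, h3]
end

section
/- Let k ≥ 2 and n = 2k. For every position x of Nim^=_{2k,k}, the Sprague–Grundy value satisfies: G(x) = u(x) if m(x) < z(x), and G(x) = v(x) if m(x) ≥ z(x). -/
/-- `m(x)`: the minimum pile size of the position `x`. -/
noncomputable def mval (n : ℕ) (x : Fin n → ℕ) : ℕ := sInf (Set.range x)

/-- `y(x) = T_{n,k}(x₁ - m(x), …, xₙ - m(x))`. -/
noncomputable def yval (n k : ℕ) (x : Fin n → ℕ) : ℕ :=
  tetris n k fun i => x i - mval n x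

/-- `z(x) = 1 + C(y(x)+1, 2)`. -/
noncomputable def zval (n k : ℕ) (x : Fin n → ℕ) : ℕ :=
  1 + (yval n k x + 1).choose 2

def PP (k : ℕ) (x : Fin (2 * k) → ℕ) (t : ℕ) : Prop := k * t ≤ ∑ i, min (x i) t

def decOn {k : ℕ} (M : Finset (Fin (2 * k))) (x : Fin (2 * k) → ℕ) : Fin (2 * k) → ℕ :=
  fun i => if i ∈ M then x i - 1 else x i

theorem PP_mono {k : ℕ} {x w : Fin (2 * k) → ℕ} {t : ℕ} (h : ∀ i, x i ≤ w i) (hp : PP k x t) :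
    PP k w t :=
  le_trans hp (Finset.sum_le_sum fun i _ => min_le_min_right t (h i))

theorem PP_of_card {k : ℕ} {x : Fin (2 * k) → ℕ} {t : ℕ} (A : Finset (Fin (2 * k)))
    (hA : k ≤ A.card) (h : ∀ i ∈ A, t ≤ x i) : PP k x t := by
  unfold PP
  calc k * t ≤ A.card * t := Nat.mul_le_mul_right t hA
    _ = ∑ i ∈ A, t := by simp
    _ ≤ ∑ i ∈ A, min (x i) t := Finset.sum_le_sum fun i hi => le_min (h i hi) le_rfl
    _ ≤ ∑ i, min (x i) t := Finset.sum_le_univ_sum_of_nonneg (by simp)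

theorem exists_top {ι : Type*} [DecidableEq ι] (f : ι → ℕ) (A : Finset ι) (c : ℕ)
    (hc : c ≤ A.card) :
    ∃ S ⊆ A, S.card = c ∧ ∀ i ∈ S, ∀ j ∈ A, j ∉ S → f j ≤ f i := by
  induction c with
  | zero => exact ⟨∅, by simp, by simp, by simp⟩
  | succ c ih =>
    obtain ⟨S, hS, hcard, htop⟩ := ih (by omega)
    have hne : (A \ S).Nonempty := by
      rw [← Finset.card_pos, Finset.card_sdiff_of_subset hS]; omega
    obtain ⟨b, hb, hmax⟩ := Finset.exists_max_image (A \ S) f hne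
    rw [Finset.mem_sdiff] at hb
    refine ⟨insert b S, Finset.insert_subset hb.1 hS, ?_, ?_⟩
    · rw [Finset.card_insert_of_notMem hb.2, hcard]
    · intro i hi j hj hjn
      rw [Finset.mem_insert, not_or] at hjn
      rcases Finset.mem_insert.1 hi with rfl | hi
      · exact hmax j (Finset.mem_sdiff.2 ⟨hj, hjn.2⟩)
      · exact htop i hi j hj hjn.2

theorem PP_dec {k : ℕ} {x : Fin (2 * k) → ℕ} {t : ℕ} (b : Fin (2 * k))
    (S : Finset (Fin (2 * k))) (hb : b ∉ S) (hS : S.card + 1 = k)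
    (htop : ∀ i ∈ S, ∀ j, j ∉ S → j ≠ b → x j ≤ x i) (hp : PP k x (t + 1)) :
    PP k (decOn (insert b S) x) t := by
  by_cases hc : k ≤ (Finset.univ.filter fun i => t + 1 ≤ x i).card
  · refine PP_of_card _ hc ?_
    intro i hi
    have := (Finset.mem_filter.1 hi).2
    unfold decOn; split_ifs <;> omega
  · have hout : ∀ j, j ∉ insert b S → x j ≤ t := by
      intro j hj
      by_contra hlt
      apply hc
      rw [Finset.mem_insert, not_or] at hj
      calc k = (insert j S).card := by rw [Finset.card_insert_of_notMem hj.2, hS]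
        _ ≤ _ := Finset.card_le_card ?_
      intro i hi
      refine Finset.mem_filter.2 ⟨Finset.mem_univ _, ?_⟩
      rcases Finset.mem_insert.1 hi with rfl | hi
      · omega
      · have := htop i hi j hj.2 hj.1; omega
    unfold PP at *
    have h1 : ∑ i, min (x i) (t + 1) ≤
        ∑ i, (min (decOn (insert b S) x i) t + if i ∈ insert b S then 1 else 0) := by
      apply Finset.sum_le_sum
      intro i _
      have := hout i
      unfold decOn
      split_ifs with h
      · omega
      · have := this h; omega
    rw [Finset.sum_add_distrib] at h1
    have h2 : ∑ i, (if i ∈ insert b S then 1 else 0) = k := by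
      rw [Finset.sum_ite_mem, Finset.univ_inter, Finset.sum_const, smul_eq_mul, mul_one,
        Finset.card_insert_of_notMem hb, hS]
    rw [h2] at h1
    have : k * (t + 1) = k * t + k := by ring
    omega

theorem PP_unit {k : ℕ} (hk : 2 ≤ k) {x : Fin (2 * k) → ℕ} {t : ℕ} (b : Fin (2 * k))
    (hp : PP k x (t + 1)) : PP k (decOn {b} x) t := by
  obtain ⟨S, hS, hcard, htop⟩ := exists_top x (Finset.univ.erase b) (k - 1)
    (by rw [Finset.card_erase_of_mem (Finset.mem_univ _), Finset.card_univ, Fintype.card_fin]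
        omega)
  have hb : b ∉ S := fun h => by simpa using hS h
  refine PP_mono ?_ (PP_dec b S hb (by omega)
    (fun i hi j hj hjb => htop i hi j (by simp [hjb]) hj) hp)
  intro i
  unfold decOn
  by_cases h : i = b
  · simp [h]
  · by_cases h' : i ∈ S <;> simp [h, h']

theorem exists_argmin {k : ℕ} (hk : 2 ≤ k) (x : Fin (2 * k) → ℕ) : ∃ a, ∀ i, x a ≤ x i := by
  have : Nonempty (Fin (2 * k)) := ⟨⟨0, by omega⟩⟩
  exact Finite.exists_min x

theorem card_erase2 {k : ℕ} (a b : Fin (2 * k)) (h : b ≠ a) :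
    ((Finset.univ.erase a).erase b).card = 2 * k - 2 := by
  rw [Finset.card_erase_of_mem (by simp [h]), Finset.card_erase_of_mem (Finset.mem_univ _),
    Finset.card_univ, Fintype.card_fin]
  omega

theorem moveTop {k : ℕ} (hk : 2 ≤ k) {x : Fin (2 * k) → ℕ} {t : ℕ} (a : Fin (2 * k))
    (ha : ∀ i, x a ≤ x i) (hp : PP k x (t + 1)) :
    ∃ M : Finset (Fin (2 * k)), a ∉ M ∧ M.card = k ∧ (∀ i ∈ M, 0 < x i) ∧ PP k (decOn M x) t := by
  have hne : (Finset.univ.erase a).Nonempty := by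
    rw [← Finset.card_pos, Finset.card_erase_of_mem (Finset.mem_univ _),
      Finset.card_univ, Fintype.card_fin]
    omega
  obtain ⟨b, hb, hmax⟩ := Finset.exists_max_image _ x hne
  have hba : b ≠ a := (Finset.mem_erase.1 hb).1
  obtain ⟨S, hS, hcard, htop⟩ := exists_top x ((Finset.univ.erase a).erase b) (k - 1)
    (by rw [card_erase2 a b hba]; omega)
  have hbS : b ∉ S := fun h => by simpa using hS h
  have haS : a ∉ S := fun h => by simpa using hS h
  have htop' : ∀ i ∈ S, ∀ j, j ∉ S → j ≠ b → x j ≤ x i := by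
    intro i hi j hj hjb
    by_cases h : j = a
    · rw [h]; exact ha i
    · exact htop i hi j (by simp [h, hjb]) hj
  have hcM : (insert b S).card = k := by rw [Finset.card_insert_of_notMem hbS]; omega
  refine ⟨insert b S, ?_, hcM, ?_, PP_dec b S hbS (by omega) htop' hp⟩
  · simp [haS, Ne.symm hba]
  · intro i hi
    by_contra h0
    have h0 : x i = 0 := by omega
    have hz : ∀ j, j ∉ (insert b S).erase i → x j = 0 := by
      intro j hj
      rcases Finset.mem_insert.1 hi with rfl | hi
      · by_cases h : j = a
        · have := ha i; rw [h]; omega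
        · have := hmax j (by simp [h]); omega
      · by_cases hji : j = i
        · rw [hji, h0]
        · have hj' : j ∉ insert b S := fun h => hj (Finset.mem_erase.2 ⟨hji, h⟩)
          rw [Finset.mem_insert, not_or] at hj'
          have := htop' i hi j hj'.2 hj'.1
          omega
    unfold PP at hp
    have h1 : ∑ j, min (x j) (t + 1) ≤ ∑ j, if j ∈ (insert b S).erase i then (t + 1) else 0 := by
      apply Finset.sum_le_sum
      intro j _
      split_ifs with h
      · omega
      · have := hz j h; omega
    rw [Finset.sum_ite_mem, Finset.univ_inter, Finset.sum_const, smul_eq_mul,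
      Finset.card_erase_of_mem hi, hcM] at h1
    have h2 : (k - 1) * (t + 1) < k * (t + 1) := Nat.mul_lt_mul_of_pos_right (by omega) (by omega)
    omega

theorem move_of {k : ℕ} {x w : Fin (2 * k) → ℕ} (M : Finset (Fin (2 * k))) (hM : M.card = k)
    (h1 : ∀ i ∈ M, w i < x i) (h2 : ∀ i, i ∉ M → w i = x i) : ExactMove (2 * k) k x w := by
  refine ⟨fun i => ?_, ?_⟩
  · by_cases h : i ∈ M
    · exact (h1 i h).le
    · exact (h2 i h).le
  · refine Eq.trans (congrArg Finset.card ?_) hM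
    ext i
    simp only [Finset.mem_filter, Finset.mem_univ, true_and]
    constructor
    · intro h
      by_contra hc
      rw [h2 i hc] at h
      omega
    · exact h1 i

theorem PP_of_move {k : ℕ} {x w : Fin (2 * k) → ℕ} {t : ℕ} (h : ExactMove (2 * k) k x w)
    (hp : PP k w t) : PP k x (t + 1) := by
  obtain ⟨h1, h2⟩ := h
  unfold PP at *
  have h3 : ∑ i, (min (w i) t + if w i < x i then 1 else 0) ≤ ∑ i, min (x i) (t + 1) := by
    apply Finset.sum_le_sum
    intro i _
    have := h1 i
    split_ifs <;> omega
  rw [Finset.sum_add_distrib, ← Finset.card_filter, h2] at h3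
  have : k * (t + 1) = k * t + k := by ring
  omega

theorem hasChain_iff_s1 {k : ℕ} (hk : 2 ≤ k) (t : ℕ) (x : Fin (2 * k) → ℕ) :
    HasChain (2 * k) k x t ↔ PP k x t := by
  induction t generalizing x with
  | zero =>
    constructor
    · intro _; simp [PP]
    · intro _; exact ⟨fun _ => x, rfl, fun i => i.elim0⟩
  | succ t ih =>
    constructor
    · rintro ⟨f, hf0, hf⟩
      have hm := hf 0
      have : HasChain (2 * k) k (f 1) t := by
        refine ⟨fun i => f i.succ, ?_, fun i => ?_⟩
        · rfl
        · have := hf i.succ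
          simpa using this
      rw [ih] at this
      rw [← hf0]
      exact PP_of_move (by simpa using hm) this
    · intro hp
      obtain ⟨a, ha⟩ := exists_argmin hk x
      obtain ⟨M, _, hM, hpos, hP⟩ := moveTop hk a ha hp
      obtain ⟨f, hf0, hf⟩ := (ih _).2 hP
      refine ⟨Fin.cons x f, rfl, fun i => ?_⟩
      refine Fin.cases ?_ (fun i => ?_) i
      · have : ExactMove (2 * k) k x (decOn M x) :=
          move_of M hM (fun i hi => by have := hpos i hi; simp [decOn, hi]; omega)
            (fun i hi => by simp [decOn, hi])
        simpa [hf0] using this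
      · have := hf i
        rw [← Fin.succ_castSucc]
        simpa using this

theorem PP_down {k : ℕ} (hk : 2 ≤ k) {x : Fin (2 * k) → ℕ} {s t : ℕ} (h : s ≤ t)
    (hp : PP k x t) : PP k x s := by
  induction t, h using Nat.le_induction with
  | base => exact hp
  | succ t _ ih =>
    apply ih
    refine PP_mono ?_ (PP_unit hk ⟨0, by omega⟩ hp)
    intro i; unfold decOn; split_ifs <;> omega

theorem le_tetris {k : ℕ} (hk : 2 ≤ k) (x : Fin (2 * k) → ℕ) (t : ℕ) :
    t ≤ tetris (2 * k) k x ↔ PP k x t := by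
  have hset : {m | HasChain (2 * k) k x m} = {m | PP k x m} := by
    ext m; exact hasChain_iff_s1 hk m x
  unfold tetris
  rw [hset]
  have hbdd : BddAbove {m | PP k x m} := by
    refine ⟨∑ i, x i, ?_⟩
    intro m hm
    have hm : k * m ≤ ∑ i, min (x i) m := hm
    have h1 : ∑ i, min (x i) m ≤ ∑ i, x i := Finset.sum_le_sum fun i _ => min_le_left _ _
    nlinarith
  constructor
  · intro h
    have : sSup {m | PP k x m} ∈ {m | PP k x m} :=
      Nat.sSup_mem ⟨0, by simp [PP]⟩ hbdd
    exact PP_down hk h this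
  · intro h
    exact le_csSup hbdd h

theorem tetris_mono {k : ℕ} (hk : 2 ≤ k) {x w : Fin (2 * k) → ℕ} (h : ∀ i, x i ≤ w i) :
    tetris (2 * k) k x ≤ tetris (2 * k) k w :=
  (le_tetris hk _ _).2 (PP_mono h ((le_tetris hk _ _).1 le_rfl))

theorem tetris_move {k : ℕ} (hk : 2 ≤ k) {x w : Fin (2 * k) → ℕ}
    (h : ExactMove (2 * k) k x w) : tetris (2 * k) k w < tetris (2 * k) k x :=
  (le_tetris hk _ _).2 (PP_of_move h ((le_tetris hk _ _).1 le_rfl))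

theorem tetris_ub {k : ℕ} (hk : 2 ≤ k) {x : Fin (2 * k) → ℕ} {c : ℕ} (M : Finset (Fin (2 * k)))
    (hM : M.card = k) (a : Fin (2 * k)) (haM : a ∉ M) (h0 : ∀ i ∈ M, x i = 0) (ha : x a ≤ c) :
    tetris (2 * k) k x ≤ c := by
  by_contra hc
  have hp := (le_tetris hk x (c + 1)).1 (by omega)
  unfold PP at hp
  have h1 : ∑ i, (min (x i) (c + 1) + if i ∈ insert a M then (if i = a then 1 else (c + 1)) else 0)
      ≤ ∑ i : Fin (2 * k), (c + 1) := by
    apply Finset.sum_le_sum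
    intro i _
    by_cases hia : i = a
    · subst hia; simp; omega
    · by_cases hi : i ∈ M
      · simp [hia, hi, h0 i hi]
      · simp [hia, hi]
  rw [Finset.sum_add_distrib, Finset.sum_ite_mem, Finset.univ_inter,
    Finset.sum_insert haM, Finset.sum_const, Finset.card_univ, Fintype.card_fin] at h1
  have h2 : ∑ i ∈ M, (if i = a then 1 else (c + 1)) = k * (c + 1) := by
    have h3 : ∑ i ∈ M, (if i = a then 1 else (c + 1)) = ∑ i ∈ M, (c + 1) := by
      apply Finset.sum_congr rfl
      intro i hi
      rw [if_neg]; rintro rfl; exact haM hi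
    rw [h3, Finset.sum_const, hM, smul_eq_mul]
  rw [h2] at h1
  simp only [if_true, smul_eq_mul] at h1
  have : 2 * k * (c + 1) = k * (c + 1) + k * (c + 1) := by ring
  omega

theorem tetris_ivt {k : ℕ} (hk : 2 ≤ k) (L H : Fin (2 * k) → ℕ) (g : ℕ) (hLH : ∀ i, L i ≤ H i)
    (hL : tetris (2 * k) k L ≤ g) (hH : g ≤ tetris (2 * k) k H) :
    ∃ w, (∀ i, L i ≤ w i) ∧ (∀ i, w i ≤ H i) ∧ tetris (2 * k) k w = g := by
  induction hs : ∑ i, H i using Nat.strong_induction_on generalizing H with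
  | _ s ih =>
    by_cases hg : tetris (2 * k) k H = g
    · exact ⟨H, hLH, fun _ => le_rfl, hg⟩
    · have hex : ∃ i, L i < H i := by
        by_contra hc
        push Not at hc
        have : L = H := funext fun i => le_antisymm (hLH i) (hc i)
        subst this
        omega
      obtain ⟨b, hb⟩ := hex
      have hle : ∀ i, decOn {b} H i ≤ H i := by
        intro i; unfold decOn; split_ifs <;> omega
      obtain ⟨w, h1, h2, h3⟩ := ih (∑ i, decOn {b} H i) (by
          rw [← hs]
          refine Finset.sum_lt_sum (fun i _ => hle i) ⟨b, Finset.mem_univ _, ?_⟩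
          simp [decOn]; omega) (decOn {b} H) (by
          intro i
          unfold decOn
          by_cases h : i = b
          · subst h; simp; omega
          · simp [h, hLH i]) (by
          rw [le_tetris hk]
          apply PP_unit hk
          rw [← le_tetris hk]
          omega) rfl
      exact ⟨w, h1, fun i => (h2 i).trans (hle i), h3⟩

theorem mval_eq {k : ℕ} {x : Fin (2 * k) → ℕ} {c : ℕ} (a : Fin (2 * k)) (ha : x a = c)
    (h : ∀ i, c ≤ x i) : mval (2 * k) x = c := by
  unfold mval
  apply le_antisymm
  · exact Nat.sInf_le ⟨a, ha⟩
  · refine le_csInf ⟨x a, a, rfl⟩ ?_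
    rintro _ ⟨i, rfl⟩
    exact h i

theorem mval_spec {k : ℕ} (hk : 2 ≤ k) (x : Fin (2 * k) → ℕ) :
    ∃ a, x a = mval (2 * k) x ∧ ∀ i, mval (2 * k) x ≤ x i := by
  obtain ⟨a, ha⟩ := exists_argmin hk x
  have := mval_eq a rfl ha
  exact ⟨a, this.symm, fun i => this ▸ ha i⟩

theorem yval_eq {k : ℕ} {x : Fin (2 * k) → ℕ} {c : ℕ} (h : mval (2 * k) x = c) :
    yval (2 * k) k x = tetris (2 * k) k (fun i => x i - c) := by
  unfold yval; rw [h]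

theorem reach0 {k : ℕ} (hk : 2 ≤ k) (x : Fin (2 * k) → ℕ) (q : ℕ) (hq : q < yval (2 * k) k x) :
    ∃ w, ExactMove (2 * k) k x w ∧ mval (2 * k) w = mval (2 * k) x ∧ yval (2 * k) k w = q := by
  obtain ⟨a, ha, hmin⟩ := mval_spec hk x
  set m := mval (2 * k) x with hm
  rw [yval_eq hm.symm] at hq
  set d : Fin (2 * k) → ℕ := fun i => x i - m with hd
  have hda : d a = 0 := by simp [hd, ha]
  obtain ⟨t, ht⟩ : ∃ t, tetris (2 * k) k d = t + 1 := ⟨tetris (2 * k) k d - 1, by omega⟩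
  obtain ⟨M, haM, hM, hpos, hP⟩ := moveTop (t := t) hk a (x := d)
    (fun i => by rw [hda]; omega) ((le_tetris hk _ _).1 ht.ge)
  obtain ⟨w, hw1, hw2, hw3⟩ := tetris_ivt hk (fun i => if i ∈ M then 0 else d i) (decOn M d) q
    (by intro i; unfold decOn; split_ifs <;> omega)
    (le_trans (tetris_ub hk M hM a haM (c := 0) (by intro i hi; simp [hi]) (by simp [haM, hda]))
      (Nat.zero_le _))
    (by have := (le_tetris hk _ _).2 hP; omega)
  have hwM : ∀ i ∈ M, w i < d i := by
    intro i hi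
    have h1 := hw2 i
    have h2 := hpos i hi
    simp only [decOn, hi, if_true] at h1
    omega
  have hwN : ∀ i, i ∉ M → w i = d i := by
    intro i hi
    have h1 := hw2 i
    have h2 := hw1 i
    simp only [decOn, hi, if_false] at h1 h2
    omega
  have hmv : mval (2 * k) (fun i => w i + m) = m :=
    mval_eq a (by simp [hwN a haM, hda]) (fun i => by omega)
  refine ⟨fun i => w i + m, ?_, hmv, ?_⟩
  · apply move_of M hM
    · intro i hi
      have := hwM i hi
      simp only [hd] at this
      omega
    · intro i hi
      have := hwN i hi
      have := hmin i
      simp only [hd] at *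
      omega
  · rw [yval_eq hmv]
    simpa using hw3

def lowF {k : ℕ} (x : Fin (2 * k) → ℕ) (c : ℕ) (p : Fin (2 * k)) (S : Finset (Fin (2 * k))) :
    Fin (2 * k) → ℕ := fun i => if i ∈ insert p S then 0 else x i - c

def highF {k : ℕ} (x : Fin (2 * k) → ℕ) (c : ℕ) (p : Fin (2 * k)) (S : Finset (Fin (2 * k))) :
    Fin (2 * k) → ℕ := fun i => if i = p then 0 else if i ∈ S then x i - 1 - c else x i - c

theorem reach_core {k : ℕ} (hk : 2 ≤ k) (x : Fin (2 * k) → ℕ) (c : ℕ) (hc : ∀ i, c < x i)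
    (p : Fin (2 * k)) (S : Finset (Fin (2 * k))) (hp : p ∉ S) (hS : S.card + 1 = k) (q : ℕ)
    (hL : tetris (2 * k) k (lowF x c p S) ≤ q) (hH : q ≤ tetris (2 * k) k (highF x c p S)) :
    ∃ w, ExactMove (2 * k) k x w ∧ mval (2 * k) w = c ∧ yval (2 * k) k w = q := by
  obtain ⟨w, hw1, hw2, hw3⟩ := tetris_ivt hk _ _ q (by
    intro i
    unfold lowF highF
    by_cases h : i = p
    · simp [h]
    · by_cases h' : i ∈ S <;> simp [h, h']) hL hH
  have hwp : w p = 0 := by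
    have := hw2 p
    simp [highF] at this
    exact this
  have hwS : ∀ i ∈ S, w i ≤ x i - 1 - c := by
    intro i hi
    have := hw2 i
    have hip : i ≠ p := by rintro rfl; exact hp hi
    simpa [highF, hi, hip] using this
  have hwN : ∀ i, i ∉ insert p S → w i = x i - c := by
    intro i hi
    have h1 := hw1 i
    have h2 := hw2 i
    have h3 : i ≠ p ∧ i ∉ S := by simpa using hi
    simp only [lowF, highF, hi, h3.1, h3.2, if_false] at h1 h2
    omega
  have hmv : mval (2 * k) (fun i => w i + c) = c :=
    mval_eq p (by simp [hwp]) (fun i => by omega)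
  refine ⟨fun i => w i + c, ?_, hmv, ?_⟩
  · apply move_of (insert p S) (by rw [Finset.card_insert_of_notMem hp, hS])
    · intro i hi
      have h0 := hc i
      rcases Finset.mem_insert.1 hi with rfl | hi
      · omega
      · have := hwS i hi
        omega
    · intro i hi
      have h0 := hc i
      have := hwN i hi
      omega
  · rw [yval_eq hmv]
    simpa using hw3

theorem picks {k : ℕ} (hk : 2 ≤ k) (x : Fin (2 * k) → ℕ) (a : Fin (2 * k))
    (ha : ∀ i, x a ≤ x i) : ∃ (e : Fin (2 * k)) (S : Finset (Fin (2 * k))),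
      e ≠ a ∧ a ∉ S ∧ e ∉ S ∧ S.card + 1 = k ∧ (∀ i, i ≠ a → x e ≤ x i) ∧
      (∀ i ∈ S, ∀ j, j ∉ S → x j ≤ x i) := by
  have hne : (Finset.univ.erase a).Nonempty := by
    rw [← Finset.card_pos, Finset.card_erase_of_mem (Finset.mem_univ _),
      Finset.card_univ, Fintype.card_fin]
    omega
  obtain ⟨e, he, hmin⟩ := Finset.exists_min_image _ x hne
  have hea : e ≠ a := (Finset.mem_erase.1 he).1
  obtain ⟨S, hS, hcard, htop⟩ := exists_top x ((Finset.univ.erase a).erase e) (k - 1)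
    (by rw [card_erase2 a e hea]; omega)
  have heS : e ∉ S := fun h => by simpa using hS h
  have haS : a ∉ S := fun h => by simpa using hS h
  refine ⟨e, S, hea, haS, heS, by omega, fun i hi => hmin i (by simp [hi]), ?_⟩
  intro i hi j hj
  by_cases h : j = a
  · rw [h]; exact ha i
  · by_cases h' : j = e
    · rw [h']; exact hmin i (by simp; rintro rfl; exact haS hi)
    · exact htop i hi j (by simp [h, h']) hj

theorem reachJ {k : ℕ} (hk : 2 ≤ k) (x : Fin (2 * k) → ℕ) (a : Fin (2 * k))
    (ha : ∀ i, x a ≤ x i) (e : Fin (2 * k)) (S : Finset (Fin (2 * k)))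
    (hea : e ≠ a) (haS : a ∉ S) (heS : e ∉ S) (hS : S.card + 1 = k)
    (he : ∀ i, i ≠ a → x e ≤ x i) (c q : ℕ) (hc : c < x a) (hq : x a - c ≤ q)
    (hH : q ≤ tetris (2 * k) k (highF x c a S)) :
    ∃ w, ExactMove (2 * k) k x w ∧ mval (2 * k) w = c ∧ yval (2 * k) k w = q := by
  have hc' : ∀ i, c < x i := fun i => lt_of_lt_of_le hc (ha i)
  by_cases h : x e - c ≤ q
  · refine reach_core hk x c hc' a S haS hS q (le_trans ?_ h) hH
    refine tetris_ub hk (insert a S) (by rw [Finset.card_insert_of_notMem haS, hS]) e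
      (by simp [hea, heS]) (fun i hi => by simp only [lowF, hi, if_true]) ?_
    simp [lowF, hea, heS]
  · refine reach_core hk x c hc' e S heS hS q (le_trans ?_ hq) ?_
    · refine tetris_ub hk (insert e S) (by rw [Finset.card_insert_of_notMem heS, hS]) a
        (by simp [hea.symm, haS]) (fun i hi => by simp only [lowF, hi, if_true]) ?_
      simp [lowF, hea.symm, haS]
    · rw [le_tetris hk]
      refine PP_of_card ((Finset.univ.erase a).erase e) (by rw [card_erase2 a e hea]; omega) ?_
      intro i hi
      simp only [Finset.mem_erase, Finset.mem_univ, and_true] at hi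
      have := he i hi.2
      unfold highF
      rw [if_neg hi.1]
      split_ifs <;> omega

theorem reach1 {k : ℕ} (hk : 2 ≤ k) (x : Fin (2 * k) → ℕ) (j q : ℕ) (hj : 1 ≤ j)
    (hjm : j ≤ mval (2 * k) x) (hjq : j ≤ q) (hq : q ≤ yval (2 * k) k x) :
    ∃ w, ExactMove (2 * k) k x w ∧ mval (2 * k) w = mval (2 * k) x - j ∧
      yval (2 * k) k w = q := by
  obtain ⟨a, ha, hmin⟩ := mval_spec hk x
  have ha' : ∀ i, x a ≤ x i := fun i => ha ▸ hmin i
  obtain ⟨e, S, hea, haS, heS, hS, he, htop⟩ := picks hk x a ha'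
  refine reachJ hk x a ha' e S hea haS heS hS he _ q (by omega) (by omega) (hq.trans ?_)
  rw [yval_eq rfl]
  apply tetris_mono hk
  intro i
  have := hmin i
  unfold highF
  split_ifs with h1 h2
  · rw [h1]; omega
  · omega
  · omega

noncomputable def FF (k : ℕ) (x : Fin (2 * k) → ℕ) : ℕ :=
  if mval (2 * k) x ≤ (yval (2 * k) k x + 1).choose 2 then tetris (2 * k) k x
  else (yval (2 * k) k x + 1).choose 2 +
    (mval (2 * k) x - 1 - (yval (2 * k) k x + 1).choose 2) % (yval (2 * k) k x + 1)

theorem C_succ (y : ℕ) : (y + 1 + 1).choose 2 = (y + 1).choose 2 + (y + 1) := by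
  have h := Nat.choose_succ_succ' (y + 1) 1
  rw [Nat.choose_one_right] at h
  simp only [Nat.reduceAdd] at h
  omega

theorem C_mono {y q : ℕ} (h : y ≤ q) : (y + 1).choose 2 ≤ (q + 1).choose 2 :=
  Nat.choose_le_choose 2 (by omega)

theorem block (g : ℕ) : ∃ q, (q + 1).choose 2 ≤ g ∧ g < (q + 1).choose 2 + (q + 1) := by
  induction g with
  | zero => exact ⟨0, by simp, by simp⟩
  | succ g ih =>
    obtain ⟨q, h1, h2⟩ := ih
    by_cases h : g + 1 < (q + 1).choose 2 + (q + 1)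
    · exact ⟨q, by omega, h⟩
    · exact ⟨q + 1, by rw [C_succ]; omega, by rw [C_succ]; omega⟩

theorem T_lower {k : ℕ} (hk : 2 ≤ k) (x : Fin (2 * k) → ℕ) :
    2 * mval (2 * k) x + yval (2 * k) k x ≤ tetris (2 * k) k x := by
  obtain ⟨a, ha, hmin⟩ := mval_spec hk x
  set m := mval (2 * k) x with hm
  rw [yval_eq hm.symm, le_tetris hk]
  have hp := (le_tetris hk (fun i => x i - m) _).1 le_rfl
  set y := tetris (2 * k) k (fun i => x i - m)
  unfold PP at *
  have h1 : ∑ i : Fin (2 * k), (m + min (x i - m) y) ≤ ∑ i, min (x i) (2 * m + y) := by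
    apply Finset.sum_le_sum
    intro i _
    have := hmin i
    omega
  rw [Finset.sum_add_distrib, Finset.sum_const, Finset.card_univ, Fintype.card_fin,
    smul_eq_mul] at h1
  have h2 : k * (2 * m + y) = 2 * k * m + k * y := by ring
  dsimp only at hp
  omega

/-- after a move that lowers the minimum by `j`, the new `y` is at least `j`. -/
theorem y_lower {k : ℕ} (hk : 2 ≤ k) {x w : Fin (2 * k) → ℕ} (h : ExactMove (2 * k) k x w) :
    mval (2 * k) x ≤ mval (2 * k) w + yval (2 * k) k w := by
  obtain ⟨a, ha, hmin⟩ := mval_spec hk x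
  have : mval (2 * k) x - mval (2 * k) w ≤ yval (2 * k) k w := by
    rw [yval_eq rfl, le_tetris hk]
    refine PP_of_card (Finset.univ.filter fun i => ¬ w i < x i) ?_ ?_
    · have h2 := Finset.card_filter_add_card_filter_not (s := Finset.univ) (fun i => w i < x i)
      rw [h.2, Finset.card_univ, Fintype.card_fin] at h2
      omega
    · intro i hi
      have h1 := (Finset.mem_filter.1 hi).2
      have := hmin i
      omega
  omega

theorem m_mono {k : ℕ} (hk : 2 ≤ k) {x w : Fin (2 * k) → ℕ} (h : ExactMove (2 * k) k x w) :
    mval (2 * k) w ≤ mval (2 * k) x := by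
  obtain ⟨a, ha, hmin⟩ := mval_spec hk x
  obtain ⟨b, hb, hmin'⟩ := mval_spec hk w
  rw [← ha]
  exact (hmin' a).trans (h.1 a)

theorem y_lt {k : ℕ} (hk : 2 ≤ k) {x w : Fin (2 * k) → ℕ} (h : ExactMove (2 * k) k x w)
    (hm : mval (2 * k) w = mval (2 * k) x) : yval (2 * k) k w < yval (2 * k) k x := by
  obtain ⟨a, ha, hmin⟩ := mval_spec hk w
  rw [yval_eq rfl, yval_eq hm.symm]
  apply tetris_move hk
  refine ⟨fun i => Nat.sub_le_sub_right (h.1 i) _, ?_⟩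
  refine Eq.trans (congrArg Finset.card ?_) h.2
  ext i
  have := hmin i
  have := h.1 i
  simp only [Finset.mem_filter, Finset.mem_univ, true_and]
  omega

theorem FF_ne {k : ℕ} (hk : 2 ≤ k) {x w : Fin (2 * k) → ℕ} (h : ExactMove (2 * k) k x w) :
    FF k w ≠ FF k x := by
  have h1 := T_lower hk x
  have h2 := T_lower hk w
  have h3 := y_lower hk h
  have h4 := m_mono hk h
  have h5 := y_lt hk h
  have h6 := tetris_move hk h
  unfold FF
  generalize mval (2 * k) w = m' at *
  generalize mval (2 * k) x = m at *
  generalize yval (2 * k) k w = y' at *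
  generalize yval (2 * k) k x = y at *
  have hmod1 := Nat.mod_lt (m - 1 - (y + 1).choose 2) (Nat.succ_pos y)
  have hmod2 := Nat.mod_lt (m' - 1 - (y' + 1).choose 2) (Nat.succ_pos y')
  have hle1 := Nat.mod_le (m - 1 - (y + 1).choose 2) (y + 1)
  have hle2 := Nat.mod_le (m' - 1 - (y' + 1).choose 2) (y' + 1)
  split_ifs with ha hb hb
  · omega
  · -- w short, x long
    by_cases hmm : m' = m
    · have := C_mono (h5 hmm).le
      omega
    · omega
  · omega
  · intro heq
    rcases lt_trichotomy y' y with hy | hy | hy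
    · have := C_mono (Nat.succ_le_of_lt hy)
      have := C_succ y'
      simp only [Nat.succ_eq_add_one] at *
      omega
    · subst hy
      have hmm : m' ≠ m := fun h => lt_irrefl _ (h5 h)
      have heq' : (m' - 1 - (y' + 1).choose 2) % (y' + 1) =
          (m - 1 - (y' + 1).choose 2) % (y' + 1) := by omega
      have hd := (Nat.modEq_iff_dvd' (by omega)).1 heq'
      have := Nat.le_of_dvd (by omega) hd
      omega
    · have := C_mono (Nat.succ_le_of_lt hy)
      have := C_succ y
      simp only [Nat.succ_eq_add_one] at *
      omega

theorem reach_long {k : ℕ} (hk : 2 ≤ k) (x : Fin (2 * k) → ℕ) (g q : ℕ)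
    (hq1 : (q + 1).choose 2 ≤ g) (hq2 : g < (q + 1).choose 2 + (q + 1))
    (hgm : g < mval (2 * k) x)
    (hqy : q < yval (2 * k) k x ∨
      (q = yval (2 * k) k x ∧ (mval (2 * k) x - (g + 1)) % (q + 1) ≠ 0)) :
    ∃ w, ExactMove (2 * k) k x w ∧ FF k w = g := by
  set m := mval (2 * k) x with hm
  set j := (m - (g + 1)) % (q + 1) with hj
  have hjlt : j < q + 1 := Nat.mod_lt _ (by omega)
  have hjle : j ≤ m - (g + 1) := Nat.mod_le _ _
  have hex : ∃ w, ExactMove (2 * k) k x w ∧ mval (2 * k) w = m - j ∧ yval (2 * k) k w = q := by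
    by_cases h0 : j = 0
    · rw [h0]
      exact reach0 hk x q (by omega)
    · exact reach1 hk x j q (by omega) (by omega) (by omega) (by omega)
  obtain ⟨w, hw, hwm, hwy⟩ := hex
  refine ⟨w, hw, ?_⟩
  unfold FF
  rw [hwm, hwy, if_neg (by omega)]
  have hdiv := Nat.div_add_mod (m - (g + 1)) (q + 1)
  rw [← hj] at hdiv
  have : m - j - 1 - (q + 1).choose 2 =
      (g - (q + 1).choose 2) + (q + 1) * ((m - (g + 1)) / (q + 1)) := by omega
  rw [this, Nat.add_mul_mod_self_left, Nat.mod_eq_of_lt (by omega)]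
  omega

theorem reach_short {k : ℕ} (hk : 2 ≤ k) (x : Fin (2 * k) → ℕ) (g : ℕ)
    (hshort : mval (2 * k) x ≤ (yval (2 * k) k x + 1).choose 2)
    (hgm : mval (2 * k) x ≤ g) (hgT : g < tetris (2 * k) k x) :
    ∃ w, ExactMove (2 * k) k x w ∧ FF k w = g := by
  have hzero : (∃ w, ExactMove (2 * k) k x w ∧ mval (2 * k) w = 0 ∧ yval (2 * k) k w = g) →
      ∃ w, ExactMove (2 * k) k x w ∧ FF k w = g := by
    rintro ⟨w, hw, hm, hy⟩
    refine ⟨w, hw, ?_⟩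
    unfold FF
    rw [hm, if_pos (Nat.zero_le _), ← hy, yval_eq hm]
    rfl
  by_cases hm0 : mval (2 * k) x = 0
  · apply hzero
    have hy : yval (2 * k) k x = tetris (2 * k) k x := by rw [yval_eq hm0]; rfl
    obtain ⟨w, hw, h1, h2⟩ := reach0 hk x g (by omega)
    exact ⟨w, hw, by omega, h2⟩
  obtain ⟨a, ha, hmin⟩ := mval_spec hk x
  have ha' : ∀ i, x a ≤ x i := fun i => ha ▸ hmin i
  obtain ⟨e, S, hea, haS, heS, hS, he, htop⟩ := picks hk x a ha'
  by_cases hH : g ≤ tetris (2 * k) k (highF x 0 a S)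
  · apply hzero
    exact reachJ hk x a ha' e S hea haS heS hS he 0 g (by omega) (by omega) hH
  have hT : g ≤ tetris (2 * k) k (decOn (insert a S) x) := by
    rw [le_tetris hk]
    refine PP_dec a S haS hS (fun i hi j hj _ => htop i hi j hj) ?_
    rw [← le_tetris hk]
    exact hgT
  obtain ⟨w, hw1, hw2, hw3⟩ := tetris_ivt hk (highF x 0 a S) (decOn (insert a S) x) g (by
    intro i
    unfold highF decOn
    by_cases h : i = a
    · simp [h]
    · by_cases h' : i ∈ S <;> simp [h, h']) (by omega) hT
  have hwa : w a ≤ x a - 1 := by simpa [decOn] using hw2 a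
  have hwS : ∀ i ∈ S, w i = x i - 1 := by
    intro i hi
    have h1 := hw1 i
    have h2 := hw2 i
    have hia : i ≠ a := by rintro rfl; exact haS hi
    simp [highF, decOn, hi, hia] at h1 h2
    omega
  have hwN : ∀ i, i ∉ insert a S → w i = x i := by
    intro i hi
    have h1 := hw1 i
    have h2 := hw2 i
    have h3 : i ≠ a ∧ i ∉ S := by simpa using hi
    simp [highF, decOn, h3.1, h3.2] at h1 h2
    omega
  have hge : ∀ i, i ≠ a → x i - 1 ≤ w i := by
    intro i hi
    by_cases h : i ∈ S
    · rw [hwS i h]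
    · rw [hwN i (by simp [hi, h])]; omega
  have hmw : mval (2 * k) w = w a := by
    refine mval_eq a rfl ?_
    intro i
    by_cases h : i = a
    · rw [h]
    · have := hge i h
      have := ha' i
      omega
  have hyw : yval (2 * k) k x ≤ yval (2 * k) k w := by
    rw [yval_eq hmw, yval_eq ha.symm]
    apply tetris_mono hk
    intro i
    by_cases h : i = a
    · rw [h]; omega
    · have := hge i h
      have := ha' i
      omega
  refine ⟨w, ?_, ?_⟩
  · apply move_of (insert a S) (by rw [Finset.card_insert_of_notMem haS, hS])
    · intro i hi
      have := hmin i
      rcases Finset.mem_insert.1 hi with rfl | hi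
      · omega
      · have := hwS i hi; omega
    · exact hwN
  · unfold FF
    rw [if_pos, hw3]
    have := C_mono hyw
    omega

theorem FF_reach {k : ℕ} (hk : 2 ≤ k) (x : Fin (2 * k) → ℕ) (g : ℕ) (hg : g < FF k x) :
    ∃ w, ExactMove (2 * k) k x w ∧ FF k w = g := by
  obtain ⟨q, hq1, hq2⟩ := block g
  unfold FF at hg
  split_ifs at hg with hs
  · by_cases hgm : mval (2 * k) x ≤ g
    · exact reach_short hk x g hs hgm hg
    · refine reach_long hk x g q hq1 hq2 (by omega) (Or.inl ?_)
      by_contra hc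
      have := C_mono (not_lt.1 hc)
      omega
  · have hmod1 := Nat.mod_lt (mval (2 * k) x - 1 - (yval (2 * k) k x + 1).choose 2)
      (Nat.succ_pos (yval (2 * k) k x))
    have hle1 := Nat.mod_le (mval (2 * k) x - 1 - (yval (2 * k) k x + 1).choose 2)
      (yval (2 * k) k x + 1)
    refine reach_long hk x g q hq1 hq2 (by omega) ?_
    rcases lt_trichotomy q (yval (2 * k) k x) with hy | hy | hy
    · exact Or.inl hy
    · right
      refine ⟨hy, ?_⟩
      rw [hy] at hq1 hq2 ⊢
      generalize yval (2 * k) k x = y at *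
      generalize mval (2 * k) x = m at *
      intro h0
      have hd := Nat.div_add_mod (m - (g + 1)) (y + 1)
      rw [h0] at hd
      have : m - 1 - (y + 1).choose 2 =
        (g - (y + 1).choose 2) + (y + 1) * ((m - (g + 1)) / (y + 1)) := by omega
      rw [this, Nat.add_mul_mod_self_left, Nat.mod_eq_of_lt (by omega)] at hg
      omega
    · have := C_mono (Nat.succ_le_of_lt hy)
      have := C_succ (yval (2 * k) k x)
      simp only [Nat.succ_eq_add_one] at *
      omega

theorem grundy_eq_FF {k : ℕ} (hk : 2 ≤ k) (x : Fin (2 * k) → ℕ) : grundy (2 * k) k x = FF k x := by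
  induction hs : ∑ i, x i using Nat.strong_induction_on generalizing x with
  | _ s ih =>
    have hne : ∀ w, ExactMove (2 * k) k x w → w ≠ x := by
      rintro w hw rfl
      have := tetris_move hk hw
      omega
    have hlt : ∀ w, ExactMove (2 * k) k x w → grundy (2 * k) k w = FF k w := by
      intro w hw
      refine ih _ ?_ w rfl
      rw [← hs]
      refine Finset.sum_lt_sum (fun i _ => hw.1 i) ?_
      by_contra hc
      push Not at hc
      exact hne w hw (funext fun i => le_antisymm (hw.1 i) (hc i (Finset.mem_univ i)))
    rw [grundy]
    apply le_antisymm
    · apply Nat.sInf_le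
      intro w hw _
      rw [hlt w hw]
      exact FF_ne hk hw
    · refine le_csInf ⟨FF k x, ?_⟩ ?_
      · intro w hw _
        rw [hlt w hw]
        exact FF_ne hk hw
      · intro g hg
        by_contra hc
        obtain ⟨w, hw, hwg⟩ := FF_reach hk x g (not_le.1 hc)
        exact hg w hw (hne w hw) ((hlt w hw).trans hwg)

/-- For `k ≥ 2` and `n = 2k`, the Sprague–Grundy function of `Nim^=_{2k,k}` equals
`u(x) = T_{2k,k}(x)` when `m(x) < z(x)`, and equals
`v(x) = (z(x)-1) + ((m(x)-z(x)) mod (y(x)+1))` when `m(x) ≥ z(x)`. -/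
theorem grundy_exact_two_k (k : ℕ) (hk : 2 ≤ k) (x : Fin (2 * k) → ℕ) :
    (mval (2 * k) x < zval (2 * k) k x → grundy (2 * k) k x = tetris (2 * k) k x) ∧
    (zval (2 * k) k x ≤ mval (2 * k) x →
      grundy (2 * k) k x =
        (zval (2 * k) k x - 1) +
          (mval (2 * k) x - zval (2 * k) k x) % (yval (2 * k) k x + 1)) := by
  rw [grundy_eq_FF hk]
  unfold FF zval
  constructor
  · intro h
    rw [if_pos (by omega)]
  · intro h
    rw [if_neg (by omega), Nat.add_sub_cancel_left, Nat.sub_sub]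
end

section
/- Let k ≥ 2 and let x = (x_1, …, x_{2k}) be a nondecreasing position (x_1 ≤ x_2 ≤ ⋯ ≤ x_{2k}) of Nim^=_{2k,k}. Then x is a P-position (i.e., G(x) = 0) if and only if x_1 = x_2 = ⋯ = x_k = x_{k+1}. -/
theorem grundy_zero_iff_aux (n k : ℕ) (x : Fin n → ℕ) :
    grundy n k x = 0 ↔ ∀ x' : Fin n → ℕ, ExactMove n k x x' → x' ≠ x → grundy n k x' ≠ 0 := by
  rw [grundy, Nat.sInf_eq_zero]
  constructor
  · rintro (h | h)
    · exact h
    · exfalso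
      have hfin : ((fun y => grundy n k y) '' (Set.Iic x)).Finite := (Set.finite_Iic x).image _
      obtain ⟨g, hg⟩ := hfin.exists_notMem
      have : g ∈ (∅ : Set ℕ) := by
        rw [← h]
        intro x' hm _ he
        exact hg ⟨x', hm.1, he⟩
      exact this
  · intro h
    exact Or.inl h

/-- The `k + 1` smallest piles are equal. -/
def PPos (k : ℕ) (x : Fin (2 * k) → ℕ) : Prop :=
  ∃ m, (∀ i, m ≤ x i) ∧ k + 1 ≤ (Finset.univ.filter fun i => x i = m).card

theorem no_move_PPos (k : ℕ) (x x' : Fin (2 * k) → ℕ) (hx : PPos k x)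
    (hm : ExactMove (2 * k) k x x') : ¬ PPos k x' := by
  rintro ⟨m', hmin', hc'⟩
  obtain ⟨m, hmin, hc⟩ := hx
  obtain ⟨hle, hcard⟩ := hm
  by_cases hlt : m' < m
  · have : (Finset.univ.filter fun i => x' i = m') ⊆ Finset.univ.filter fun i => x' i < x i := by
      intro i hi
      simp only [Finset.mem_filter, Finset.mem_univ, true_and] at hi ⊢
      have := hmin i
      omega
    have := Finset.card_le_card this
    omega
  · have hd : Disjoint (Finset.univ.filter fun i => x i = m)
        (Finset.univ.filter fun i => x' i < x i) := by
      rw [Finset.disjoint_left]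
      intro i hi hi'
      simp only [Finset.mem_filter, Finset.mem_univ, true_and] at hi hi'
      have := hmin' i
      omega
    have h1 := Finset.card_union_of_disjoint hd
    have h2 := Finset.card_le_univ ((Finset.univ.filter fun i => x i = m) ∪
        (Finset.univ.filter fun i => x' i < x i))
    rw [Fintype.card_fin] at h2
    omega

theorem exists_move_PPos (k : ℕ) (hk : 2 ≤ k) (x : Fin (2 * k) → ℕ) (hx : ¬ PPos k x) :
    ∃ x', ExactMove (2 * k) k x x' ∧ PPos k x' := by
  have : Nonempty (Fin (2 * k)) := ⟨⟨0, by omega⟩⟩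
  obtain ⟨a, ha⟩ := Finite.exists_min x
  have hc : (Finset.univ.filter fun i => x i = x a).card ≤ k := by
    by_contra h
    exact hx ⟨x a, ha, by omega⟩
  have hs := Finset.card_filter_add_card_filter_not (s := (Finset.univ : Finset (Fin (2 * k))))
    (fun i => x i = x a)
  rw [Finset.card_univ, Fintype.card_fin] at hs
  obtain ⟨t, ht, htc⟩ := Finset.exists_subset_card_eq
    (s := Finset.univ.filter fun i => ¬ x i = x a) (n := k) (by omega)
  have hlt : ∀ i ∈ t, x a < x i := by
    intro i hi
    have h1 := ht hi
    simp only [Finset.mem_filter, Finset.mem_univ, true_and] at h1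
    have := ha i
    omega
  have hat : a ∉ t := fun h => lt_irrefl _ (hlt a h)
  refine ⟨fun i => if i ∈ t then x a else x i, ⟨?_, ?_⟩, x a, ?_, ?_⟩
  · intro i
    dsimp only
    split_ifs
    · exact ha i
    · exact le_rfl
  · refine Eq.trans ?_ htc
    congr 1
    ext i
    by_cases h : i ∈ t
    · simp [h, hlt i h]
    · simp [h]
  · intro i
    dsimp only
    split_ifs
    · exact le_rfl
    · exact ha i
  · have hins := Finset.card_insert_of_notMem hat
    rw [htc] at hins
    refine hins.ge.trans ?_
    apply Finset.card_le_card
    intro i hi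
    rw [Finset.mem_insert] at hi
    rcases hi with rfl | hi
    · simp
    · simp [hi]

theorem grundy_zero_iff_PPos (k : ℕ) (hk : 2 ≤ k) : ∀ (s : ℕ) (x : Fin (2 * k) → ℕ),
    ∑ i, x i = s → (grundy (2 * k) k x = 0 ↔ PPos k x) := by
  intro s
  induction s using Nat.strong_induction_on with
  | _ s ih =>
  intro x hs
  have key : ∀ x', ExactMove (2 * k) k x x' → (grundy (2 * k) k x' = 0 ↔ PPos k x') := by
    intro x' hm
    refine ih _ ?_ x' rfl
    rw [← hs]
    have hne : (Finset.univ.filter fun i => x' i < x i).Nonempty := by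
      rw [← Finset.card_pos, hm.2]
      omega
    obtain ⟨i, hi⟩ := hne
    exact Finset.sum_lt_sum (fun j _ => hm.1 j)
      ⟨i, Finset.mem_univ i, (Finset.mem_filter.mp hi).2⟩
  rw [grundy_zero_iff_aux]
  constructor
  · intro h
    by_contra hx
    obtain ⟨x', hm, hp⟩ := exists_move_PPos k hk x hx
    refine h x' hm ?_ ((key x' hm).2 hp)
    rintro rfl
    exact hx hp
  · intro hx x' hm _ h0
    exact no_move_PPos k x x' hx hm ((key x' hm).1 h0)

/-- For `k ≥ 2`, a nondecreasing position `x` of `Nim^=_{2k,k}` is a P-position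
iff its `k+1` smallest coordinates are all equal: `x₁ = ⋯ = x_k = x_{k+1}`
(indices `0, …, k` in 0-based notation). -/
theorem grundy_eq_zero_iff (k : ℕ) (hk : 2 ≤ k) (x : Fin (2 * k) → ℕ)
    (hmono : Monotone x) :
    grundy (2 * k) k x = 0 ↔
      ∀ i j : Fin (2 * k), (i : ℕ) ≤ k → (j : ℕ) ≤ k → x i = x j := by
  rw [grundy_zero_iff_PPos k hk _ x rfl]
  constructor
  · rintro ⟨m, hmin, hc⟩
    have key : ∀ i : Fin (2 * k), (i : ℕ) ≤ k → x i = m := by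
      intro i hi
      by_contra hne
      have hsub : (Finset.univ.filter fun j => x j = m) ⊆ Finset.Iio i := by
        intro j hj
        simp only [Finset.mem_filter, Finset.mem_univ, true_and] at hj
        rw [Finset.mem_Iio]
        by_contra hij
        have h1 := hmono (not_lt.mp hij)
        have h2 := hmin i
        omega
      have := Finset.card_le_card hsub
      rw [Fin.card_Iio] at this
      omega
    intro i j hi hj
    rw [key i hi, key j hj]
  · intro h
    refine ⟨x ⟨0, by omega⟩, fun i => hmono (Nat.zero_le _), ?_⟩
    have hsub : Finset.Iic (⟨k, by omega⟩ : Fin (2 * k)) ⊆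
        Finset.univ.filter fun i => x i = x ⟨0, by omega⟩ := by
      intro i hi
      rw [Finset.mem_Iic] at hi
      simp only [Finset.mem_filter, Finset.mem_univ, true_and]
      exact h _ _ hi (Nat.zero_le _)
    have := Finset.card_le_card hsub
    rwa [Fin.card_Iic] at this
end

section
/- The Tetris function is monotone: for positions x, x' ∈ ℤ_{≥0}^n of Nim^=_{n,k}, if x'_i ≤ x_i for all i, then T_{n,k}(x') ≤ T_{n,k}(x). -/
theorem chain_bdd (n k : ℕ) (hk1 : 1 ≤ k) (x : Fin n → ℕ) (m : ℕ) (h : HasChain n k x m) :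
    m ≤ ∑ i, x i := by
  obtain ⟨f, h0, hf⟩ := h
  have key : ∀ j : Fin (m + 1), (∑ i, f j i) + j.val ≤ ∑ i, x i := by
    intro j
    induction j using Fin.induction with
    | zero => simp [h0]
    | succ j ih =>
      obtain ⟨h1, h2⟩ := hf j
      have hne : (Finset.univ.filter fun i => f j.succ i < f j.castSucc i).Nonempty := by
        rw [← Finset.card_pos]; omega
      obtain ⟨i, hi⟩ := hne
      have hlt : ∑ i, f j.succ i < ∑ i, f j.castSucc i :=
        Finset.sum_lt_sum (fun i _ => h1 i) ⟨i, Finset.mem_univ _, (Finset.mem_filter.mp hi).2⟩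
      simp only [Fin.val_succ, Fin.val_castSucc] at *
      omega
  have := key (Fin.last m)
  simp only [Fin.val_last] at this
  omega

theorem chain_mono (n k : ℕ) (x x' : Fin n → ℕ) (hle : ∀ i, x' i ≤ x i) (m : ℕ)
    (h : HasChain n k x' m) : HasChain n k x m := by
  obtain ⟨f, h0, hf⟩ := h
  refine ⟨fun j i => f j i + (x i - x' i), ?_, ?_⟩
  · funext i
    have := hle i
    simp only [h0]
    omega
  · intro j
    obtain ⟨h1, h2⟩ := hf j
    refine ⟨fun i => Nat.add_le_add_right (h1 i) _, ?_⟩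
    simpa only [Nat.add_lt_add_iff_right] using h2

/-- Monotonicity of the Tetris function: if `x' ≤ x` componentwise then
`T_{n,k}(x') ≤ T_{n,k}(x)`. -/
theorem tetris_monotone (n k : ℕ) (hk1 : 1 ≤ k) (hkn : k ≤ n)
    (x x' : Fin n → ℕ) (hle : ∀ i, x' i ≤ x i) :
    tetris n k x' ≤ tetris n k x := by
  unfold tetris
  apply csSup_le_csSup
  · exact ⟨∑ i, x i, fun m hm => chain_bdd n k hk1 x m hm⟩
  · exact ⟨0, fun _ => x', rfl, fun i => i.elim0⟩
  · exact fun m hm => chain_mono n k x x' hle m hm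
end

section
/- For positions x, x' ∈ ℤ_{≥0}^n of Nim^=_{n,k}, if x'_i ≤ x_i for all i and Σ_{i=1}^n (x_i − x'_i) = 1 (i.e., x' is obtained from x by removing a single token), then T_{n,k}(x) − 1 ≤ T_{n,k}(x') ≤ T_{n,k}(x). -/
lemma hasChain_zero (n k : ℕ) (x : Fin n → ℕ) : HasChain n k x 0 :=
  ⟨fun _ => x, rfl, fun i => i.elim0⟩

lemma hasChain_succ (n k : ℕ) (x : Fin n → ℕ) (m : ℕ) :
    HasChain n k x (m + 1) ↔ ∃ y, ExactMove n k x y ∧ HasChain n k y m := by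
  constructor
  · rintro ⟨f, h0, hf⟩
    refine ⟨f 1, ?_, fun j => f j.succ, ?_, ?_⟩
    · have := hf 0
      rw [← h0]
      exact this
    · rfl
    · intro i
      exact hf i.succ
  · rintro ⟨y, hy, f, h0, hf⟩
    refine ⟨Fin.cons x f, rfl, ?_⟩
    intro i
    refine Fin.cases ?_ (fun j => ?_) i
    · simpa [h0] using hy
    · have := hf j
      rw [Fin.castSucc_succ, Fin.cons_succ, Fin.cons_succ]
      exact this

lemma hasChain_mono (n k : ℕ) (m : ℕ) (x x' : Fin n → ℕ) (hle : ∀ i, x' i ≤ x i)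
    (h : HasChain n k x' m) : HasChain n k x m := by
  obtain ⟨f, h0, hf⟩ := h
  refine ⟨fun j i => f j i + (x i - x' i), ?_, ?_⟩
  · funext i
    have := hle i
    simp only [h0]
    omega
  · intro j
    obtain ⟨h1, h2⟩ := hf j
    refine ⟨fun i => Nat.add_le_add_right (h1 i) _, ?_⟩
    simpa using h2

lemma hasChain_bound (n k : ℕ) (hk : 1 ≤ k) (m : ℕ) (x : Fin n → ℕ)
    (h : HasChain n k x m) : m ≤ ∑ i, x i := by
  induction m generalizing x with
  | zero => exact Nat.zero_le _
  | succ m ih =>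
    obtain ⟨y, ⟨h1, h2⟩, hy⟩ := (hasChain_succ n k x m).1 h
    have h3 := ih y hy
    obtain ⟨i, hi⟩ := Finset.card_pos.1 (h2 ▸ hk)
    have : ∑ i, y i < ∑ i, x i :=
      Finset.sum_lt_sum (fun i _ => h1 i) ⟨i, Finset.mem_univ i, (Finset.mem_filter.1 hi).2⟩
    omega

lemma hasChain_remove (n k : ℕ) (i : Fin n) (m : ℕ) (x x' : Fin n → ℕ)
    (hi : x' i + 1 = x i) (hne : ∀ j, j ≠ i → x' j = x j)
    (h : HasChain n k x (m + 1)) : HasChain n k x' m := by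
  induction m generalizing x x' with
  | zero => exact hasChain_zero n k x'
  | succ m ih =>
    obtain ⟨y, ⟨h1, h2⟩, hy⟩ := (hasChain_succ n k x (m + 1)).1 h
    by_cases hyi : y i < x i
    · refine hasChain_mono n k _ x' y (fun j => ?_) hy
      by_cases hj : j = i
      · subst hj
        omega
      · rw [hne j hj]
        exact h1 j
    · have hyi' : y i = x i := le_antisymm (h1 i) (not_lt.1 hyi)
      refine (hasChain_succ n k x' m).2 ⟨Function.update y i (x' i), ⟨fun j => ?_, ?_⟩,
        ih y _ ?_ ?_ hy⟩
      · by_cases hj : j = i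
        · subst hj
          simp
        · simp [hj, hne j hj, h1 j]
      · rw [← h2]
        congr 1
        ext j
        by_cases hj : j = i
        · subst hj
          simp [hyi']
        · simp [hj, hne j hj]
      · simp [hi, hyi']
      · intro j hj
        simp [hj]

theorem tetris_single_token (n k : ℕ) (hk1 : 1 ≤ k) (hkn : k ≤ n)
    (x x' : Fin n → ℕ) (hle : ∀ i, x' i ≤ x i)
    (hsum : ∑ i, (x i - x' i) = 1) :
    tetris n k x - 1 ≤ tetris n k x' ∧ tetris n k x' ≤ tetris n k x := by
  have bdd : ∀ z, BddAbove {m | HasChain n k z m} := fun z =>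
    ⟨∑ i, z i, fun m hm => hasChain_bound n k hk1 m z hm⟩
  have att : ∀ z, HasChain n k z (tetris n k z) := fun z =>
    Nat.sSup_mem ⟨0, hasChain_zero n k z⟩ (bdd z)
  constructor
  · obtain ⟨i, -, hi⟩ := Finset.exists_ne_zero_of_sum_ne_zero (hsum ▸ one_ne_zero)
    have hs := Finset.add_sum_erase Finset.univ (fun i => x i - x' i) (Finset.mem_univ i)
    rw [hsum] at hs
    have h0 : ∑ j ∈ Finset.univ.erase i, (x j - x' j) = 0 := by omega
    rcases hT : tetris n k x with _ | m
    · simp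
    · have hc := att x
      rw [hT] at hc
      refine le_csSup (bdd x') (hasChain_remove n k i m x x' ?_ ?_ hc)
      · have := hle i
        omega
      · intro j hj
        have := (Finset.sum_eq_zero_iff.1 h0) j (by simp [hj])
        have := hle j
        omega
  · exact le_csSup (bdd x) (hasChain_mono n k _ x x' hle (att x'))
end

section
/- The Tetris function does not decrease when a token is moved from a larger pile to a smaller one: let x ∈ ℤ_{≥0}^n and let i, j be indices with x_i < x_j. Define x' by x'_i = x_i + 1, x'_j = x_j − 1, and x'_l = x_l for all l ∉ {i, j}. Then T_{n,k}(x) ≤ T_{n,k}(x'). -/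
/-- Unit-step recursive version of chains. -/
def UC (n k : ℕ) : ℕ → (Fin n → ℕ) → Prop
  | 0, _ => True
  | m + 1, x => ∃ S : Finset (Fin n), S.card = k ∧ (∀ l ∈ S, 0 < x l) ∧
      UC n k m (fun l => if l ∈ S then x l - 1 else x l)

theorem UC_mono (n k m : ℕ) : ∀ x y : Fin n → ℕ, (∀ l, x l ≤ y l) → UC n k m x → UC n k m y := by
  induction m with
  | zero => intro x y _ _; trivial
  | succ m ih =>
    rintro x y h ⟨S, hS, hp, hc⟩
    refine ⟨S, hS, fun l hl => lt_of_lt_of_le (hp l hl) (h l), ih _ _ ?_ hc⟩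
    intro l
    have := h l
    split_ifs <;> omega

theorem UC_of_HasChain (n k m : ℕ) : ∀ x : Fin n → ℕ, HasChain n k x m → UC n k m x := by
  induction m with
  | zero => intro x _; trivial
  | succ m ih =>
    rintro x ⟨f, rfl, hf⟩
    have h0 := hf 0
    refine ⟨Finset.univ.filter fun l => f 1 l < f 0 l, h0.2, ?_, UC_mono n k m (f 1) _ ?_ (ih _ ⟨fun a => f a.succ, rfl, ?_⟩)⟩
    · intro l hl
      have hl2 := (Finset.mem_filter.mp hl).2
      omega
    · intro l
      have h1 : f 1 l ≤ f 0 l := h0.1 l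
      simp only [Finset.mem_filter, Finset.mem_univ, true_and]
      split_ifs <;> omega
    · intro a
      have := hf a.succ
      simpa using this

theorem HasChain_of_UC (n k m : ℕ) : ∀ x : Fin n → ℕ, UC n k m x → HasChain n k x m := by
  induction m with
  | zero => intro x _; exact ⟨fun _ => x, rfl, fun a => a.elim0⟩
  | succ m ih =>
    rintro x ⟨S, hS, hp, hc⟩
    obtain ⟨f, hf0, hf⟩ := ih _ hc
    refine ⟨Fin.cons x f, rfl, ?_⟩
    intro a
    refine Fin.cases ?_ (fun a => ?_) a
    · simp only [Fin.castSucc_zero, Fin.cons_zero, Fin.cons_succ, hf0]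
      refine ⟨fun l => ?_, ?_⟩
      · dsimp only
        split_ifs <;> omega
      · rw [← hS]
        congr 1
        ext l
        have := hp l
        by_cases hl : l ∈ S
        · have := hp l hl
          simp [hl]; omega
        · simp [hl]
    · have := hf a
      rw [← Fin.succ_castSucc]
      simpa only [Fin.cons_succ] using this

theorem UC_bound (n k m : ℕ) (hk : 1 ≤ k) : ∀ x : Fin n → ℕ, UC n k m x → m ≤ ∑ l, x l := by
  induction m with
  | zero => intro x _; omega
  | succ m ih =>
    rintro x ⟨S, hS, hp, hc⟩
    refine Nat.succ_le_of_lt (lt_of_le_of_lt (ih _ hc) ?_)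
    obtain ⟨a, ha⟩ : S.Nonempty := Finset.card_pos.mp (by omega)
    refine Finset.sum_lt_sum (fun l _ => ?_) ⟨a, Finset.mem_univ _, ?_⟩
    · split_ifs <;> omega
    · have := hp a ha
      simp only [ha, if_true]; omega

theorem UC_balance (n k m : ℕ) (i j : Fin n) : ∀ x : Fin n → ℕ, x i < x j → UC n k m x →
    UC n k m (fun l => if l = i then x i + 1 else if l = j then x j - 1 else x l) := by
  induction m with
  | zero => intro x _ _; trivial
  | succ m ih =>
    rintro x hij ⟨S, hS, hp, hc⟩
    have hne : j ≠ i := by rintro rfl; omega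
    by_cases hi : i ∈ S
    · have hpi := hp i hi
      refine ⟨S, hS, ?_, UC_mono n k m _ _ ?_ (ih _ ?_ hc)⟩
      · intro l hl
        have := hp l hl
        dsimp only
        split_ifs <;> omega
      · intro l
        by_cases h1 : l = i
        · subst h1; simp [hi]; omega
        · by_cases h2 : l = j
          · subst h2; simp [h1]; split_ifs <;> omega
          · simp [h1, h2]
      · simp only [hi, if_true]
        split_ifs <;> omega
    · by_cases hj : j ∈ S
      · refine ⟨insert i (S.erase j), ?_, ?_, UC_mono n k m _ _ ?_ hc⟩
        · rw [Finset.card_insert_of_notMem (by simp [hi]), Finset.card_erase_of_mem hj]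
          have := Finset.card_pos.mpr ⟨j, hj⟩
          omega
        · intro l hl
          by_cases h1 : l = i
          · simp [h1]
          · simp [h1] at hl
            have := hp l hl.2
            simp [h1, hl.1, this]
        · intro l
          by_cases h1 : l = i
          · subst h1; simp [hi]
          · by_cases h2 : l = j
            · subst h2; simp [h1, hj]
            · simp [h1, h2]
      · refine ⟨S, hS, ?_, UC_mono n k m _ _ ?_ (ih _ ?_ hc)⟩
        · intro l hl
          have := hp l hl
          have h1 : l ≠ i := by rintro rfl; exact hi hl
          have h2 : l ≠ j := by rintro rfl; exact hj hl
          simp [h1, h2, this]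
        · intro l
          by_cases h1 : l = i
          · subst h1; simp [hi]
          · by_cases h2 : l = j
            · subst h2; simp [h1, hj]
            · simp [h1, h2]
        · simpa [hi, hj] using hij

/-- The Tetris function does not decrease when a token is moved from a larger pile
to a smaller one. -/
theorem tetris_le_of_balance (n k : ℕ) (hk1 : 1 ≤ k) (hkn : k ≤ n)
    (x : Fin n → ℕ) (i j : Fin n) (hij : x i < x j)
    (x' : Fin n → ℕ)
    (hx' : x' = fun l => if l = i then x i + 1 else if l = j then x j - 1 else x l) :
    tetris n k x ≤ tetris n k x' := by
  subst hx'
  refine csSup_le_csSup ⟨_, fun m hm => UC_bound n k m hk1 _ (UC_of_HasChain n k m _ hm)⟩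
    ⟨0, HasChain_of_UC n k 0 x trivial⟩ ?_
  intro m hm
  exact HasChain_of_UC n k m _ (UC_balance n k m i j x hij (UC_of_HasChain n k m x hm))
end

section
/- Let k ≥ 2 and let x be a position of Nim^=_{2k,k} with m(x) ≥ z(x). Then every pair (m, y) ∈ D(x) satisfies m ≥ binom(y+1,2) + 1, and the set of values {v(m, y) : (m, y) ∈ D(x)} equals the interval of integers [0, v(x)), i.e., {0, 1, …, v(x) − 1}. -/
/-- `v(x) = (z(x) - 1) + ((m(x) - z(x)) mod (y(x)+1))`, computed in `ℤ`
(the integer `%` is the Euclidean mod, with values in `[0, y(x)]`). -/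
noncomputable def vZ (n k : ℕ) (x : Fin n → ℕ) : ℤ :=
  ((zval n k x : ℤ) - 1) + ((mval n x - zval n k x : ℤ) % (yval n k x + 1))

/-- `D₁(x) = {(m, y) : 0 ≤ m ≤ m(x), m(x) - m ≤ y < y(x)}`. -/
noncomputable def D1 (n k : ℕ) (x : Fin n → ℕ) : Set (ℤ × ℤ) :=
  {p | 0 ≤ p.1 ∧ p.1 ≤ mval n x ∧ (mval n x : ℤ) - p.1 ≤ p.2 ∧ p.2 < yval n k x}

/-- `D₂(x) = {(m, y) : m(x) - v(x) + z(x) - 1 ≤ m < m(x), y = y(x)}`. -/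
noncomputable def D2 (n k : ℕ) (x : Fin n → ℕ) : Set (ℤ × ℤ) :=
  {p | (mval n x : ℤ) - vZ n k x + zval n k x - 1 ≤ p.1 ∧ p.1 < (mval n x : ℤ) ∧
    p.2 = (yval n k x : ℤ)}

/-- `D(x) = D₁(x) ∪ D₂(x)`. -/
noncomputable def DD (n k : ℕ) (x : Fin n → ℕ) : Set (ℤ × ℤ) := D1 n k x ∪ D2 n k x

/-- `C(y+1, 2)` for an integer `y`. -/
def binomZ (y : ℤ) : ℤ := y * (y + 1) / 2

/-- `v(m, y) = C(y+1,2) + ((m - 1 - C(y+1,2)) mod (y+1))`. -/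
def vpair (m y : ℤ) : ℤ := binomZ y + (m - 1 - binomZ y) % (y + 1)

theorem binomZ_two (y : ℤ) : 2 * binomZ y = y * (y + 1) := by
  unfold binomZ
  exact Int.mul_ediv_cancel' (Int.even_mul_succ_self y).two_dvd

theorem binomZ_choose (y : ℕ) : ((y + 1).choose 2 : ℤ) = binomZ y := by
  have h1 := binomZ_two y
  have h2 : ((y + 1).choose 2) * 2 = (y + 1) * y := by
    have := Nat.triangle_succ y
    rw [Nat.choose_two_right]
    exact Nat.div_mul_cancel (by simpa using (Nat.even_mul_pred_self (y + 1)).two_dvd)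
  have h3 : (((y + 1).choose 2 : ℕ) : ℤ) * 2 = (y + 1) * y := by exact_mod_cast h2
  linarith

theorem binomZ_mono {a b : ℤ} (ha : 0 ≤ a) (hab : a ≤ b) : binomZ a ≤ binomZ b := by
  have := binomZ_two a
  have := binomZ_two b
  nlinarith

theorem binomZ_succ (a : ℤ) : binomZ (a + 1) = binomZ a + (a + 1) := by
  have := binomZ_two a
  have := binomZ_two (a + 1)
  linarith

theorem binomZ_find (Y : ℕ) (w : ℤ) (hw : 0 ≤ w) (h : w < binomZ Y) :
    ∃ y : ℤ, 0 ≤ y ∧ y < Y ∧ binomZ y ≤ w ∧ w < binomZ y + (y + 1) := by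
  induction Y with
  | zero => simp [binomZ] at h; omega
  | succ n ih =>
    by_cases hc : w < binomZ n
    · obtain ⟨y, h1, h2, h3⟩ := ih hc
      exact ⟨y, h1, by push_cast; omega, h3⟩
    · refine ⟨n, by omega, by push_cast; omega, by omega, ?_⟩
      push_cast at h
      rw [binomZ_succ] at h
      exact h

/-- If `m(x) ≥ z(x)`, every `(m, y) ∈ D(x)` satisfies `m ≥ C(y+1,2) + 1`, and
`{v(m, y) : (m, y) ∈ D(x)}` is exactly the integer interval `[0, v(x))`. -/
theorem vpair_image_of_D (k : ℕ) (hk : 2 ≤ k) (x : Fin (2 * k) → ℕ)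
    (hx : zval (2 * k) k x ≤ mval (2 * k) x) :
    (∀ p ∈ DD (2 * k) k x, binomZ p.2 + 1 ≤ p.1) ∧
    (fun p : ℤ × ℤ => vpair p.1 p.2) '' DD (2 * k) k x =
      Set.Ico (0 : ℤ) (vZ (2 * k) k x) := by
  have hz : (zval (2 * k) k x : ℤ) = 1 + binomZ (yval (2 * k) k x) := by
    unfold zval
    push_cast
    rw [← binomZ_choose]
  have hx' : (zval (2 * k) k x : ℤ) ≤ mval (2 * k) x := by exact_mod_cast hx
  unfold DD D1 D2 vZ
  rw [hz] at hx' ⊢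
  generalize yval (2 * k) k x = Y at *
  generalize mval (2 * k) x = M at *
  have hYp : (0 : ℤ) < Y + 1 := by omega
  have hB0 : 0 ≤ binomZ Y := by
    have := binomZ_two Y
    nlinarith
  have hr0 := Int.emod_nonneg ((M : ℤ) - (1 + binomZ Y)) hYp.ne'
  have hr1 := Int.emod_lt_of_pos ((M : ℤ) - (1 + binomZ Y)) hYp
  have hrd := Int.emod_add_mul_ediv ((M : ℤ) - (1 + binomZ Y)) (Y + 1)
  have hle : ((M : ℤ) - (1 + binomZ Y)) % (Y + 1) ≤ (M : ℤ) - (1 + binomZ Y) := by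
    have := Int.ediv_nonneg (a := (M : ℤ) - (1 + binomZ Y)) (b := Y + 1) (by omega) hYp.le
    nlinarith
  generalize ((M : ℤ) - (1 + binomZ Y)) % (Y + 1) = r at *
  generalize ((M : ℤ) - (1 + binomZ Y)) / (Y + 1) = q at *
  have key : ∀ m : ℤ, M - r ≤ m → m ≤ M → vpair m Y = binomZ Y + (r - (M - m)) := by
    intro m h1 h2
    unfold vpair
    have : m - 1 - binomZ Y = (r - (M - m)) + (Y + 1) * q := by linarith
    rw [this, Int.add_mul_emod_self_left, Int.emod_eq_of_lt (by omega) (by omega)]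
  constructor
  · rintro ⟨m, y⟩ (⟨h1, h2, h3, h4⟩ | ⟨h1, h2, h3⟩) <;> dsimp only at *
    · have := binomZ_succ y
      have := binomZ_mono (a := y + 1) (b := Y) (by omega) (by omega)
      omega
    · subst h3
      omega
  · ext w
    simp only [Set.mem_image, Set.mem_Ico]
    constructor
    · rintro ⟨⟨m, y⟩, (⟨h1, h2, h3, h4⟩ | ⟨h1, h2, h3⟩), rfl⟩ <;> dsimp only at *
      · have := binomZ_succ y
        have := binomZ_mono (a := y + 1) (b := Y) (by omega) (by omega)
        have h0 : 0 ≤ binomZ y := by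
          have := binomZ_two y
          have : 0 ≤ y := by omega
          nlinarith
        have := Int.emod_nonneg (m - 1 - binomZ y) (b := y + 1) (by omega)
        have := Int.emod_lt_of_pos (m - 1 - binomZ y) (b := y + 1) (by omega)
        unfold vpair
        omega
      · subst h3
        rw [key m (by omega) (by omega)]
        omega
    · rintro ⟨h1, h2⟩
      by_cases hc : w < binomZ Y
      · obtain ⟨y, hy0, hyY, hw1, hw2⟩ := binomZ_find Y w h1 hc
        have := binomZ_succ y
        have := binomZ_mono (a := y + 1) (b := Y) (by omega) (by omega)
        have g1 := Int.emod_nonneg (M - 1 - w) (b := y + 1) (by omega)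
        have g2 := Int.emod_lt_of_pos (M - 1 - w) (b := y + 1) (by omega)
        have g3 := Int.emod_add_mul_ediv (M - 1 - w) (y + 1)
        generalize (M - 1 - w) % (y + 1) = j at *
        generalize (M - 1 - w) / (y + 1) = t at *
        refine ⟨(M - j, y), Or.inl ⟨?_, ?_, ?_, ?_⟩, ?_⟩ <;> dsimp only
        · have : 0 ≤ binomZ y := by
            have := binomZ_two y
            nlinarith
          omega
        · omega
        · omega
        · omega
        · unfold vpair
          have : M - j - 1 - binomZ y = (w - binomZ y) + (y + 1) * t := by linarith
          rw [this, Int.add_mul_emod_self_left, Int.emod_eq_of_lt (by omega) (by omega)]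
          omega
      · refine ⟨(M - r + (w - binomZ Y), Y), Or.inr ⟨?_, ?_, rfl⟩, ?_⟩ <;> dsimp only
        · omega
        · omega
        · rw [key _ (by omega) (by omega)]
          omega
end

section
/- For every position x of Moore's Nim Nim^≤_{n,k}, x is a P-position (i.e., G(x) = 0) if and only if M(x) = 0. -/
/-- A move in Moore's Nim `Nim^≤_{n,k}`: all piles weakly decrease, at least one and
at most `k` piles strictly decrease. -/
def MooreMove (n k : ℕ) (x x' : Fin n → ℕ) : Prop :=
  x' ≠ x ∧ (∀ i, x' i ≤ x i) ∧ (Finset.univ.filter fun i => x' i < x i).card ≤ k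

/-- The Sprague–Grundy function of Moore's Nim, defined by the mex recursion. -/
noncomputable def mgrundy (n k : ℕ) (x : Fin n → ℕ) : ℕ :=
  sInf {g : ℕ | ∀ x' : Fin n → ℕ, MooreMove n k x x' → mgrundy n k x' ≠ g}
termination_by ∑ i, x i
decreasing_by
  rename_i hmv
  have hne := hmv.1
  have hle := hmv.2.1
  have hex : ∃ i, x' i < x i := by
    by_contra hc
    push_neg at hc
    exact hne (funext fun i => le_antisymm (hle i) (hc i))
  obtain ⟨i, hi⟩ := hex
  exact Finset.sum_lt_sum (fun j _ => hle j) ⟨i, Finset.mem_univ i, hi⟩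

/-- Moore's function `M(x) = Σ_j y_j (k+1)^j` where `y_j = (Σ_i x_{ij}) mod (k+1)`
and `x_{ij} = x_i / 2^j % 2` is the `j`-th binary digit of `x_i`. -/
noncomputable def mooreM (n k : ℕ) (x : Fin n → ℕ) : ℕ :=
  ∑ᶠ j : ℕ, ((∑ i, x i / 2 ^ j % 2) % (k + 1)) * (k + 1) ^ j


def MZ (n k : ℕ) (x : Fin n → ℕ) : Prop := ∀ j, (k + 1) ∣ ∑ i, x i / 2 ^ j % 2

theorem exists_bd {n : ℕ} (x : Fin n → ℕ) : ∃ N, ∀ i, x i < 2 ^ N :=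
  ⟨∑ i, x i, fun i => lt_of_le_of_lt
    (Finset.single_le_sum (f := x) (fun _ _ => Nat.zero_le _) (Finset.mem_univ i))
    Nat.lt_two_pow_self⟩

theorem mooreM_zero_iff (n k : ℕ) (x : Fin n → ℕ) : mooreM n k x = 0 ↔ MZ n k x := by
  obtain ⟨N, hN⟩ := exists_bd x
  have hz : ∀ j, N ≤ j → ∑ i, x i / 2 ^ j % 2 = 0 := by
    intro j hj
    refine Finset.sum_eq_zero fun i _ => ?_
    rw [Nat.div_eq_of_lt (lt_of_lt_of_le (hN i) (Nat.pow_le_pow_right (by norm_num) hj)), Nat.zero_mod]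
  unfold mooreM MZ
  rw [finsum_eq_sum_of_support_subset (s := Finset.range N)]
  · rw [Finset.sum_eq_zero_iff]
    constructor
    · intro h j
      by_cases hj : j < N
      · have := h j (Finset.mem_range.2 hj)
        rcases Nat.mul_eq_zero.1 this with h1 | h1
        · exact Nat.dvd_of_mod_eq_zero h1
        · exact absurd h1 (by positivity)
      · rw [hz j (by omega)]; exact dvd_zero _
    · intro h j _
      rw [Nat.mod_eq_zero_of_dvd (h j), zero_mul]
  · intro j hj
    by_contra hc
    apply hj
    have : N ≤ j := by simpa using hc
    simp [hz j this]

theorem move_not_MZ {n k : ℕ} {x x' : Fin n → ℕ} (h : MooreMove n k x x') (hx : MZ n k x) :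
    ¬ MZ n k x' := by
  classical
  intro hx'
  obtain ⟨hne, hle, hcard⟩ := h
  have hex : ∃ N, ∀ i, x i / 2 ^ N = x' i / 2 ^ N := by
    obtain ⟨N, hN⟩ := exists_bd x
    exact ⟨N, fun i => by
      rw [Nat.div_eq_of_lt (hN i), Nat.div_eq_of_lt (lt_of_le_of_lt (hle i) (hN i))]⟩
  have hs := Nat.find_spec hex
  have hm := fun m => Nat.find_min (m := m) hex
  generalize Nat.find hex = N at hs hm
  cases N with
  | zero => exact hne (funext fun i => by simpa using (hs i).symm)
  | succ j =>
    have h1 := hm j (by omega)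
    push Not at h1
    obtain ⟨i0, hi0⟩ := h1
    have key : ∀ i, x i / 2 ^ j / 2 = x' i / 2 ^ j / 2 ∧ x' i / 2 ^ j ≤ x i / 2 ^ j := by
      intro i
      refine ⟨?_, Nat.div_le_div_right (hle i)⟩
      have := hs i
      rwa [pow_succ, ← Nat.div_div_eq_div_mul, ← Nat.div_div_eq_div_mul] at this
    set D := Finset.univ.filter fun i => x' i / 2 ^ j % 2 < x i / 2 ^ j % 2 with hD
    have hsum : ∑ i, x i / 2 ^ j % 2 = ∑ i, x' i / 2 ^ j % 2 + D.card := by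
      rw [hD, Finset.card_filter, ← Finset.sum_add_distrib]
      refine Finset.sum_congr rfl fun i _ => ?_
      have := key i
      split_ifs <;> omega
    have hd : (k + 1) ∣ D.card := by
      have := hx j
      rw [hsum] at this
      exact (Nat.dvd_add_right (hx' j)).1 this
    have hpos : 0 < D.card := by
      refine Finset.card_pos.2 ⟨i0, ?_⟩
      have := key i0
      simp only [hD, Finset.mem_filter, Finset.mem_univ, true_and]
      omega
    have hDk : D.card ≤ k := by
      refine le_trans (Finset.card_le_card ?_) hcard
      intro i hi
      simp only [hD, Finset.mem_filter, Finset.mem_univ, true_and] at hi ⊢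
      rcases lt_or_eq_of_le (hle i) with h | h
      · exact h
      · rw [h] at hi; omega
    have := Nat.le_of_dvd hpos hd
    omega

theorem comb_step {α : Type*} [DecidableEq α] (k : ℕ) (S B : Finset α) (hS : S.card ≤ k) :
    ∃ B' : Finset α, (k + 1) ∣ B'.card ∧ (S ∪ (B \ B')).card ≤ k ∧ B' ⊆ B ∪ S := by
  have hmod := Nat.mod_add_div (B \ S).card (k + 1)
  have hlt := Nat.mod_lt (B \ S).card (Nat.succ_pos k)
  set m := (B \ S).card % (k + 1) with hm
  set q := (B \ S).card / (k + 1) with hq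
  by_cases h : m + S.card ≤ k
  · obtain ⟨B', hB', hc⟩ := Finset.exists_subset_card_eq (s := B \ S) (n := (k + 1) * q) (by omega)
    refine ⟨B', hc ▸ dvd_mul_right _ _, ?_, fun i hi => ?_⟩
    · have h1 : S ∪ (B \ B') ⊆ S ∪ ((B \ S) \ B') := by
        intro i; simp only [Finset.mem_union, Finset.mem_sdiff]; tauto
      have h2 := Finset.card_le_card h1
      have h3 := Finset.card_union_le S ((B \ S) \ B')
      have h4 := Finset.card_sdiff_of_subset hB'
      omega
    · have := hB' hi
      simp only [Finset.mem_union, Finset.mem_sdiff] at *; tauto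
  · obtain ⟨P, hP, hc⟩ := Finset.exists_subset_card_eq (s := S) (n := k + 1 - m) (by omega)
    refine ⟨(B \ S) ∪ P, ?_, ?_, ?_⟩
    · rw [Finset.card_union_of_disjoint]
      · refine ⟨q + 1, ?_⟩
        rw [mul_add]; omega
      · exact Finset.disjoint_of_subset_right hP Finset.sdiff_disjoint
    · refine le_trans (Finset.card_le_card ?_) hS
      intro i; simp only [Finset.mem_union, Finset.mem_sdiff]; tauto
    · intro i hi
      have := @hP i
      simp only [Finset.mem_union, Finset.mem_sdiff] at *; tauto

theorem bit_comb (N y b j : ℕ) (hy : y < 2 ^ N) (hb : b ≤ 1) :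
    (2 ^ N * b + y) / 2 ^ j % 2 = if j < N then y / 2 ^ j % 2 else if j = N then b else 0 := by
  rw [← Nat.toNat_testBit, Nat.testBit_two_pow_mul_add _ hy]
  split_ifs with h1 h2
  · rw [Nat.toNat_testBit]
  · subst h2
    rw [Nat.toNat_testBit]; simp; omega
  · rw [Nat.toNat_testBit, Nat.div_eq_of_lt]
    exact lt_of_le_of_lt hb (Nat.one_lt_two_pow (by omega))

theorem fill (n k : ℕ) (N : ℕ) : ∀ (x : Fin n → ℕ) (S : Finset (Fin n)), (∀ i, x i < 2 ^ N) →
    S.card ≤ k → ∃ (T : Finset (Fin n)) (x' : Fin n → ℕ), S ⊆ T ∧ T.card ≤ k ∧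
      (∀ i, x' i < 2 ^ N) ∧ (∀ i, i ∉ T → x' i = x i) ∧ (∀ i, i ∈ T → i ∉ S → x' i < x i) ∧
      MZ n k x' := by
  classical
  induction N with
  | zero =>
    intro x S hx hS
    refine ⟨S, x, subset_rfl, hS, hx, fun _ _ => rfl, fun i h h' => absurd h h', fun j => ?_⟩
    have : ∀ i, x i = 0 := fun i => by simpa using hx i
    simp [this]
  | succ N ih =>
    intro x S hx hS
    obtain ⟨B', hd, hc, hsub⟩ :=
      comb_step k S (Finset.univ.filter fun i => x i / 2 ^ N = 1) hS
    obtain ⟨T, y, hT, hTc, hy, hy1, hy2, hyZ⟩ :=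
      ih (fun i => x i % 2 ^ N) _ (fun i => Nat.mod_lt _ (by positivity)) hc
    have hdec : ∀ i, 2 ^ N * (x i / 2 ^ N) + x i % 2 ^ N = x i := fun i => Nat.div_add_mod _ _
    have hb1 : ∀ i, x i / 2 ^ N ≤ 1 := fun i => by
      have := hx i
      rw [pow_succ] at this
      have := Nat.div_lt_of_lt_mul this
      omega
    have hmem : ∀ i, i ∉ S → i ∉ B' → ¬ i ∈ S ∪ ((Finset.univ.filter fun i => x i / 2 ^ N = 1) \ B')
        → x i / 2 ^ N = 0 := by
      intro i h1 h2 h3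
      have := hb1 i
      simp [h1, h2] at h3
      have h4 : x i / 2 ^ N ≠ 1 := by simpa using h3
      generalize x i / 2 ^ N = z at *
      omega
    have hmem2 : ∀ i, i ∉ S → i ∈ B' → x i / 2 ^ N = 1 := by
      intro i h1 h2
      have := hsub h2
      simpa only [Finset.mem_union, h1, or_false, Finset.mem_filter, Finset.mem_univ, true_and] using this
    refine ⟨T, fun i => 2 ^ N * (if i ∈ B' then 1 else 0) + y i, Finset.union_subset_left hT, hTc,
      ?_, ?_, ?_, ?_⟩
    · intro i
      have := hy i
      rw [pow_succ]
      dsimp only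
      split_ifs <;> omega
    · intro i hi
      have hS' := fun h => hi (hT h)
      have hiS : i ∉ S := fun h => hS' (Finset.mem_union_left _ h)
      have h1 := hy1 i hi
      have h2 := hdec i
      dsimp only at h1 ⊢
      rw [h1]
      split_ifs with hB
      · rw [hmem2 i hiS hB] at h2; exact h2
      · rw [hmem i hiS hB hS'] at h2; exact h2
    · intro i hi hiS
      have h2 := hdec i
      have h0 := hy i
      dsimp only
      by_cases hS' : i ∈ S ∪ ((Finset.univ.filter fun i => x i / 2 ^ N = 1) \ B')
      · simp only [Finset.mem_union, hiS, false_or, Finset.mem_sdiff, Finset.mem_filter,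
          Finset.mem_univ, true_and] at hS'
        rw [hS'.1] at h2
        rw [if_neg hS'.2]
        omega
      · have h1 := hy2 i hi hS'
        split_ifs with hB
        · rw [hmem2 i hiS hB] at h2; omega
        · rw [hmem i hiS hB hS'] at h2; omega
    · intro j
      have : ∀ i, (2 ^ N * (if i ∈ B' then 1 else 0) + y i) / 2 ^ j % 2 = _ :=
        fun i => bit_comb N (y i) _ j (hy i) (by split_ifs <;> simp)
      simp only [this]
      by_cases h1 : j < N
      · simp only [h1, if_true]; exact hyZ j
      · by_cases h2 : j = N
        · subst h2
          simpa using hd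
        · simp [h1, h2]

theorem exists_move {n k : ℕ} {x : Fin n → ℕ} (hx : ¬ MZ n k x) :
    ∃ x', MooreMove n k x x' ∧ MZ n k x' := by
  obtain ⟨N, hN⟩ := exists_bd x
  obtain ⟨T, x', -, hT, -, h1, h2, hZ⟩ := fill n k N x ∅ hN (by simp)
  refine ⟨x', ⟨fun h => hx (h ▸ hZ), fun i => ?_, le_trans (Finset.card_le_card ?_) hT⟩, hZ⟩
  · by_cases hi : i ∈ T
    · exact (h2 i hi (by simp)).le
    · exact (h1 i hi).le
  · intro i hi
    by_contra hc
    have := h1 i hc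
    simp [this] at hi

theorem mgrundy_zero_iff (n k : ℕ) (x : Fin n → ℕ) :
    mgrundy n k x = 0 ↔ ∀ x', MooreMove n k x x' → mgrundy n k x' ≠ 0 := by
  rw [mgrundy, Nat.sInf_eq_zero]
  constructor
  · rintro (h | h)
    · exact h
    · exfalso
      have hf : (mgrundy n k '' Set.Iic x).Finite := (Set.finite_Iic x).image _
      obtain ⟨g, hg⟩ := hf.exists_notMem
      have : g ∈ {g : ℕ | ∀ x' : Fin n → ℕ, MooreMove n k x x' → mgrundy n k x' ≠ g} :=
        fun x' hm he => hg ⟨x', hm.2.1, he⟩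
      rw [h] at this
      exact this
  · exact fun h => Or.inl h

theorem mgrundy_iff_MZ (n k : ℕ) : ∀ (s : ℕ) (x : Fin n → ℕ), ∑ i, x i = s →
    (mgrundy n k x = 0 ↔ MZ n k x) := by
  intro s
  induction s using Nat.strong_induction_on with
  | _ s ih =>
    intro x hs
    have ih' : ∀ x', MooreMove n k x x' → (mgrundy n k x' = 0 ↔ MZ n k x') := by
      intro x' hm
      refine ih _ ?_ x' rfl
      rw [← hs]
      obtain ⟨i, hi⟩ : ∃ i, x' i < x i := by
        by_contra hc
        push Not at hc
        exact hm.1 (funext fun i => le_antisymm (hm.2.1 i) (hc i))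
      exact Finset.sum_lt_sum (fun j _ => hm.2.1 j) ⟨i, Finset.mem_univ i, hi⟩
    rw [mgrundy_zero_iff]
    constructor
    · intro h
      by_contra hc
      obtain ⟨x', hm, hz⟩ := exists_move hc
      exact h x' hm ((ih' x' hm).2 hz)
    · intro h x' hm h0
      exact move_not_MZ hm h ((ih' x' hm).1 h0)

theorem moore_P_position_iff (n k : ℕ) (hk1 : 1 ≤ k) (hkn : k ≤ n)
    (x : Fin n → ℕ) :
    mgrundy n k x = 0 ↔ mooreM n k x = 0 := by
  rw [mooreM_zero_iff]
  exact mgrundy_iff_MZ n k _ x rfl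
end

section
/- For every position x of Moore's Nim Nim^≤_{n,k}, G(x) = 1 if and only if M(x) = 1. -/
namespace MooreAux

def dsum (n : ℕ) (x : Fin n → ℕ) (j : ℕ) : ℕ := ∑ i, x i / 2 ^ j % 2

lemma dsum_succ (n : ℕ) (x : Fin n → ℕ) (j : ℕ) :
    dsum n x (j + 1) = dsum n (fun i => x i / 2) j := by
  unfold dsum
  refine Finset.sum_congr rfl fun i _ => ?_
  rw [Nat.div_div_eq_div_mul, pow_succ, mul_comm]

lemma dsum_zero (n : ℕ) (x : Fin n → ℕ) : dsum n x 0 = ∑ i, x i % 2 := by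
  simp [dsum]

lemma exists_bound (n : ℕ) (x : Fin n → ℕ) : ∃ N, ∀ i, x i < 2 ^ N := by
  refine ⟨∑ i, x i, fun i => ?_⟩
  exact lt_of_le_of_lt (Finset.single_le_sum (f := x) (fun _ _ => Nat.zero_le _) (Finset.mem_univ i))
    Nat.lt_two_pow_self

lemma unique_aux (n k : ℕ) (N : ℕ) : ∀ x x' : Fin n → ℕ, (∀ i, x i < 2 ^ N) →
    (∀ i, x' i ≤ x i) → (Finset.univ.filter fun i => x' i < x i).card ≤ k →
    (∀ j, dsum n x j % (k + 1) = dsum n x' j % (k + 1)) → x' = x := by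
  induction N with
  | zero =>
    intro x x' hN hle _ _
    funext i
    have := hN i
    have := hle i
    simp at *
    omega
  | succ N ih =>
    intro x x' hN hle hc hd
    have h2 : (fun i => x' i / 2) = (fun i => x i / 2) := by
      apply ih
      · intro i
        have := hN i
        rw [pow_succ] at this
        show x i / 2 < _
        omega
      · intro i
        exact Nat.div_le_div_right (hle i)
      · refine le_trans (Finset.card_le_card ?_) hc
        intro i hi
        simp only [Finset.mem_filter, Finset.mem_univ, true_and] at hi ⊢
        omega
      · intro j
        rw [← dsum_succ, ← dsum_succ]
        exact hd _
    have h2' : ∀ i, x' i / 2 = x i / 2 := fun i => congrFun h2 i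
    have h0 := hd 0
    rw [dsum_zero, dsum_zero] at h0
    have hs : ∑ i, x i % 2 = ∑ i, x' i % 2 + (Finset.univ.filter fun i => x' i < x i).card := by
      rw [Finset.card_filter, ← Finset.sum_add_distrib]
      refine Finset.sum_congr rfl fun i _ => ?_
      have := h2' i
      have := hle i
      split_ifs <;> omega
    set c := (Finset.univ.filter fun i => x' i < x i).card with hcdef
    have hc0 : c = 0 := by
      have h1 : (∑ i, x' i % 2 + c) ≡ (∑ i, x' i % 2 + 0) [MOD (k + 1)] := by
        rw [← hs]; exact h0
      have h3 := Nat.ModEq.add_left_cancel' _ h1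
      exact Nat.ModEq.eq_of_lt_of_lt h3 (by omega) (by omega)
    rw [hcdef, Finset.card_eq_zero] at hc0
    funext i
    have := hle i
    have hi : i ∉ (Finset.univ.filter fun i => x' i < x i) := by rw [hc0]; simp
    simp at hi
    omega

lemma arith (k c s t : ℕ) (hk : 1 ≤ k) (hs : s ≤ k)
    (ht : t = 0 ∨ (t = 1 ∧ (1 ≤ s ∨ c % (k + 1) ≠ 0))) :
    ∃ τ f, τ ≤ c ∧ f ≤ s ∧ s + τ ≤ k ∧ (c - τ + f) % (k + 1) = t := by
  have hq := Nat.div_add_mod c (k + 1)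
  have hm := Nat.mod_lt c (Nat.succ_pos k)
  set m := c % (k + 1)
  set q := c / (k + 1)
  have key : ∀ a u, u ≤ k → a = (k + 1) * q + u → a % (k + 1) = u := by
    intro a u hu ha
    rw [ha, Nat.mul_add_mod, Nat.mod_eq_of_lt (by omega)]
  have key' : ∀ a u, u ≤ k → a = (k + 1) * q + (k + 1) + u → a % (k + 1) = u := by
    intro a u hu ha
    rw [ha, ← Nat.mul_succ, Nat.mul_add_mod, Nat.mod_eq_of_lt (by omega)]
  rcases ht with rfl | ⟨rfl, h⟩
  · by_cases h0 : m = 0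
    · exact ⟨0, 0, by omega, by omega, by omega, key _ _ (by omega) (by omega)⟩
    by_cases h1 : k + 1 - m ≤ s
    · exact ⟨0, k + 1 - m, by omega, by omega, by omega, key' _ _ (by omega) (by omega)⟩
    · exact ⟨m, 0, by omega, by omega, by omega, key _ _ (by omega) (by omega)⟩
  · by_cases h0 : m = 0
    · exact ⟨0, 1, by omega, by omega, by omega, key _ _ (by omega) (by omega)⟩
    by_cases h1 : k + 2 - m ≤ s
    · exact ⟨0, k + 2 - m, by omega, by omega, by omega, key' _ _ (by omega) (by omega)⟩
    · exact ⟨m - 1, 0, by omega, by omega, by omega, key _ _ (by omega) (by omega)⟩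

def R (n k : ℕ) (S : Finset (Fin n)) (x x' : Fin n → ℕ) : Prop :=
  S.card ≤ k ∧ (∀ i ∈ S, x' i < x i) ∧ (∀ i, i ∉ S → x' i = x i)

lemma step (n k t : ℕ) (hk : 1 ≤ k) (x z : Fin n → ℕ) (S : Finset (Fin n))
    (hR : R n k S (fun i => x i / 2) z)
    (ht : t = 0 ∨ (t = 1 ∧ (S.Nonempty ∨ dsum n x 0 % (k + 1) ≠ 0))) :
    ∃ S' x', R n k S' x x' ∧ (∀ i, x' i / 2 = z i) ∧ dsum n x' 0 % (k + 1) = t := by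
  classical
  obtain ⟨hS, hlt, heq⟩ := hR
  set A := Finset.univ.filter fun i => i ∉ S ∧ x i % 2 = 1 with hA
  have ht' : t = 0 ∨ (t = 1 ∧ (1 ≤ S.card ∨ A.card % (k + 1) ≠ 0)) := by
    rcases ht with h | ⟨h, h1⟩
    · exact Or.inl h
    · refine Or.inr ⟨h, ?_⟩
      by_cases hne : S.Nonempty
      · exact Or.inl hne.card_pos
      · right
        have h2 := h1.resolve_left hne
        rw [Finset.not_nonempty_iff_eq_empty] at hne
        have : A.card = dsum n x 0 := by
          rw [dsum_zero, hA, Finset.card_filter]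
          refine Finset.sum_congr rfl fun i _ => ?_
          rw [hne]
          simp only [Finset.notMem_empty, not_false_eq_true, true_and]
          split_ifs <;> omega
        rwa [this]
  obtain ⟨τ, f, hτ, hf, hsum, hmod⟩ := arith k A.card S.card t hk hS ht'
  obtain ⟨T, hTA, hT⟩ := Finset.exists_subset_card_eq hτ
  obtain ⟨F, hFS, hF⟩ := Finset.exists_subset_card_eq hf
  have hTm : ∀ i ∈ T, i ∉ S ∧ x i % 2 = 1 := fun i hi => by
    have := hTA hi
    simpa [hA] using this
  set B := (A \ T) ∪ F with hB
  have hBc : B.card = A.card - τ + f := by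
    rw [hB, Finset.card_union_of_disjoint, Finset.card_sdiff_of_subset hTA, hT, hF]
    rw [Finset.disjoint_left]
    intro i hi hiF
    simp only [hA, Finset.mem_sdiff, Finset.mem_filter] at hi
    exact hi.1.2.1 (hFS hiF)
  refine ⟨S ∪ T, fun i => 2 * z i + if i ∈ B then 1 else 0, ⟨?_, ?_, ?_⟩, ?_, ?_⟩
  · exact le_trans (Finset.card_union_le _ _) (by omega)
  · intro i hi
    rw [Finset.mem_union] at hi
    by_cases hiS : i ∈ S
    · have := hlt i hiS
      simp only at this ⊢
      split_ifs <;> omega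
    · have hiT := hi.resolve_left hiS
      have h1 := heq i hiS
      have h2 := hTm i hiT
      have h3 : i ∉ B := by
        simp only [hB, Finset.mem_union, Finset.mem_sdiff]
        rintro (h | h)
        · exact h.2 hiT
        · exact hiS (hFS h)
      simp only [h3, if_false] at h1 ⊢
      omega
  · intro i hi
    rw [Finset.mem_union, not_or] at hi
    have h1 := heq i hi.1
    have h3 : i ∈ B ↔ x i % 2 = 1 := by
      simp only [hB, hA, Finset.mem_union, Finset.mem_sdiff, Finset.mem_filter, Finset.mem_univ,
        true_and]
      constructor
      · rintro (h | h)
        · exact h.1.2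
        · exact absurd (hFS h) hi.1
      · intro h
        exact Or.inl ⟨⟨hi.1, h⟩, hi.2⟩
    simp only [h3] at h1 ⊢
    split_ifs <;> omega
  · intro i
    simp only
    split_ifs <;> omega
  · rw [← hmod, ← hBc, dsum_zero]
    congr 1
    rw [← Finset.filter_univ_mem B, Finset.card_filter]
    refine Finset.sum_congr rfl fun i _ => ?_
    simp only [Finset.filter_univ_mem]
    split_ifs <;> omega

lemma exists_zero (n k : ℕ) (hk : 1 ≤ k) (N : ℕ) : ∀ x : Fin n → ℕ, (∀ i, x i < 2 ^ N) →
    ∃ S x', R n k S x x' ∧ ∀ j, dsum n x' j % (k + 1) = 0 := by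
  induction N with
  | zero =>
    intro x hN
    refine ⟨∅, x, ⟨by simp, by simp, by simp⟩, fun j => ?_⟩
    have : ∀ i, x i = 0 := fun i => by have := hN i; simpa using this
    simp [dsum, this]
  | succ N ih =>
    intro x hN
    obtain ⟨S, z, hR, hz⟩ := ih (fun i => x i / 2) (fun i => by
        have := hN i
        rw [pow_succ] at this
        show x i / 2 < _
        omega)
    obtain ⟨S', x', hR', h2, h0⟩ := step n k 0 hk x z S hR (Or.inl rfl)
    refine ⟨S', x', hR', fun j => ?_⟩
    cases j with
    | zero => exact h0
    | succ j =>
      rw [dsum_succ]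
      simp only [h2]
      exact hz j

/-- digits are `t` at bit 0 and zero above. -/
def D (n k t : ℕ) (x : Fin n → ℕ) : Prop :=
  dsum n x 0 % (k + 1) = t ∧ ∀ j, dsum n x (j + 1) % (k + 1) = 0

lemma R_move {n k : ℕ} {S : Finset (Fin n)} {x x' : Fin n → ℕ} (h : R n k S x x')
    (hne : x' ≠ x) : MooreMove n k x x' := by
  obtain ⟨h1, h2, h3⟩ := h
  refine ⟨hne, fun i => ?_, le_trans (Finset.card_le_card ?_) h1⟩
  · by_cases hi : i ∈ S
    · exact (h2 i hi).le
    · exact (h3 i hi).le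
  · intro i hi
    simp only [Finset.mem_filter, Finset.mem_univ, true_and] at hi
    by_contra hc
    exact absurd (h3 i hc) hi.ne

lemma move_zero (n k : ℕ) (hk : 1 ≤ k) (x : Fin n → ℕ) (h : ¬ D n k 0 x) :
    ∃ x', MooreMove n k x x' ∧ D n k 0 x' := by
  obtain ⟨N, hN⟩ := exists_bound n x
  obtain ⟨S, x', hR, hd⟩ := exists_zero n k hk N x hN
  have hD : D n k 0 x' := ⟨hd 0, fun j => hd _⟩
  exact ⟨x', R_move hR (by rintro rfl; exact h hD), hD⟩

lemma move_one (n k : ℕ) (hk : 1 ≤ k) (x : Fin n → ℕ) (h : ¬ D n k 0 x) (h' : ¬ D n k 1 x) :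
    ∃ x', MooreMove n k x x' ∧ D n k 1 x' := by
  obtain ⟨N, hN⟩ := exists_bound n (fun i => x i / 2)
  obtain ⟨S, z, hR, hd⟩ := exists_zero n k hk N _ hN
  obtain ⟨S', x', hR', h2, h0⟩ := step n k 1 hk x z S hR (Or.inr ⟨rfl, by
    by_contra hc
    push Not at hc
    obtain ⟨hc1, hc2⟩ := hc
    apply h
    refine ⟨hc2, fun j => ?_⟩
    have hz : z = fun i => x i / 2 := by
      funext i
      exact hR.2.2 i (by simp [hc1])
    rw [dsum_succ, ← hz]
    exact hd j⟩)
  have hD : D n k 1 x' := ⟨h0, fun j => by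
      rw [dsum_succ]
      simp only [h2]
      exact hd j⟩
  exact ⟨x', R_move hR' (by rintro rfl; exact h' hD), hD⟩

lemma no_move (n k t : ℕ) (x x' : Fin n → ℕ) (h : D n k t x) (h' : D n k t x') :
    ¬ MooreMove n k x x' := by
  rintro ⟨hne, hle, hc⟩
  obtain ⟨N, hN⟩ := exists_bound n x
  refine hne (unique_aux n k N x x' hN hle hc fun j => ?_)
  cases j with
  | zero => rw [h.1, h'.1]
  | succ j => rw [h.2, h'.2]

lemma move_sum {n k : ℕ} {x x' : Fin n → ℕ} (h : MooreMove n k x x') :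
    ∑ i, x' i < ∑ i, x i := by
  obtain ⟨hne, hle, -⟩ := h
  have hex : ∃ i, x' i < x i := by
    by_contra hc
    push Not at hc
    exact hne (funext fun i => le_antisymm (hle i) (hc i))
  obtain ⟨i, hi⟩ := hex
  exact Finset.sum_lt_sum (fun j _ => hle j) ⟨i, Finset.mem_univ i, hi⟩

lemma mex_mem (n k : ℕ) (x x' : Fin n → ℕ) (h : MooreMove n k x x') :
    mgrundy n k x' ≠ mgrundy n k x := by
  have hne : {g : ℕ | ∀ x' : Fin n → ℕ, MooreMove n k x x' → mgrundy n k x' ≠ g}.Nonempty := by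
    have hfin : (mgrundy n k '' Set.Iic x).Finite := (Set.finite_Iic x).image _
    obtain ⟨g, hg⟩ := hfin.infinite_compl.nonempty
    refine ⟨g, fun x' hx' he => hg ⟨x', ?_, he⟩⟩
    exact fun i => hx'.2.1 i
  have := Nat.sInf_mem hne
  rw [← mgrundy.eq_1] at this
  exact this x' h

lemma mex_le (n k : ℕ) (x : Fin n → ℕ) (g : ℕ)
    (h : ∀ x', MooreMove n k x x' → mgrundy n k x' ≠ g) : mgrundy n k x ≤ g := by
  rw [mgrundy]
  exact Nat.sInf_le h

lemma D_unique {n k s t : ℕ} {x : Fin n → ℕ} (h : D n k s x) (h' : D n k t x) : s = t :=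
  h.1.symm.trans h'.1

lemma main (n k : ℕ) (hk : 1 ≤ k) (m : ℕ) : ∀ x : Fin n → ℕ, ∑ i, x i = m →
    (mgrundy n k x = 0 ↔ D n k 0 x) ∧ (mgrundy n k x = 1 ↔ D n k 1 x) := by
  induction m using Nat.strong_induction_on with
  | _ m ih =>
    intro x hx
    have ih' : ∀ x', MooreMove n k x x' →
        (mgrundy n k x' = 0 ↔ D n k 0 x') ∧ (mgrundy n k x' = 1 ↔ D n k 1 x') :=
      fun x' h => ih _ (hx ▸ move_sum h) x' rfl
    by_cases h0 : D n k 0 x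
    · have hg : mgrundy n k x = 0 := by
        refine Nat.le_zero.1 (mex_le n k x 0 fun x' hm he => ?_)
        exact no_move n k 0 x x' h0 ((ih' x' hm).1.1 he) hm
      refine ⟨by simp [hg, h0], ?_⟩
      rw [hg]
      exact ⟨fun h => by omega, fun h => absurd (D_unique h0 h) (by omega)⟩
    · obtain ⟨a, ha, hDa⟩ := move_zero n k hk x h0
      have hga := (ih' a ha).1.2 hDa
      have hn0 := mex_mem n k x a ha
      rw [hga] at hn0
      refine ⟨⟨fun h => absurd h.symm hn0, fun h => absurd h h0⟩, ?_⟩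
      by_cases h1 : D n k 1 x
      · have hg : mgrundy n k x ≤ 1 := by
          refine mex_le n k x 1 fun x' hm he => ?_
          exact no_move n k 1 x x' h1 ((ih' x' hm).2.1 he) hm
        exact ⟨fun _ => h1, fun _ => by omega⟩
      · obtain ⟨b, hb, hDb⟩ := move_one n k hk x h0 h1
        have hgb := (ih' b hb).2.2 hDb
        have hn1 := mex_mem n k x b hb
        rw [hgb] at hn1
        exact ⟨fun h => absurd h.symm hn1, fun h => absurd h h1⟩

lemma mooreM_eq (n k N : ℕ) (x : Fin n → ℕ) (hN : ∀ i, x i < 2 ^ N) :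
    mooreM n k x = ∑ j ∈ Finset.range (N + 1), (dsum n x j % (k + 1)) * (k + 1) ^ j := by
  unfold mooreM
  refine finsum_eq_sum_of_support_subset _ ?_
  intro j hj
  rw [Finset.mem_coe, Finset.mem_range]
  by_contra hc
  apply hj
  have : ∀ i, x i / 2 ^ j = 0 := fun i =>
    Nat.div_eq_of_lt (lt_of_lt_of_le (hN i) (Nat.pow_le_pow_right (by omega) (by omega)))
  simp [this]

lemma mooreM_one (n k : ℕ) (hk : 1 ≤ k) (x : Fin n → ℕ) : mooreM n k x = 1 ↔ D n k 1 x := by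
  obtain ⟨N, hN⟩ := exists_bound n x
  rw [mooreM_eq n k N x hN, Finset.sum_range_succ']
  have hfac : ∑ j ∈ Finset.range N, (dsum n x (j + 1) % (k + 1)) * (k + 1) ^ (j + 1)
      = (k + 1) * ∑ j ∈ Finset.range N, (dsum n x (j + 1) % (k + 1)) * (k + 1) ^ j := by
    rw [Finset.mul_sum]
    refine Finset.sum_congr rfl fun j _ => ?_
    ring
  rw [hfac, pow_zero, mul_one]
  constructor
  · intro h
    have hz : ∑ j ∈ Finset.range N, (dsum n x (j + 1) % (k + 1)) * (k + 1) ^ j = 0 := by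
      by_contra hc
      have := Nat.le_mul_of_pos_right (k + 1) (Nat.pos_of_ne_zero hc)
      omega
    rw [hz] at h
    refine ⟨by omega, fun j => ?_⟩
    by_cases hj : j < N
    · have := (Finset.sum_eq_zero_iff.1 hz) j (Finset.mem_range.2 hj)
      simpa using this
    · have : ∀ i, x i / 2 ^ (j + 1) = 0 := fun i =>
        Nat.div_eq_of_lt (lt_of_lt_of_le (hN i) (Nat.pow_le_pow_right (by omega) (by omega)))
      simp [dsum, this]
  · rintro ⟨h0, h⟩
    simp [h, h0]

end MooreAux

/-- A position of Moore's Nim `Nim^≤_{n,k}` has Sprague–Grundy value 1 iff `M(x) = 1`. -/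
theorem moore_grundy_one_iff (n k : ℕ) (hk1 : 1 ≤ k) (hkn : k ≤ n)
    (x : Fin n → ℕ) :
    mgrundy n k x = 1 ↔ mooreM n k x = 1 := by
  rw [MooreAux.mooreM_one n k hk1 x]
  exact (MooreAux.main n k hk1 _ x rfl).2
end
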